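/- Let K be an algebraically closed field of characteristic p > 0. Let f_1,f_2,f_3, g_1,g_2,g_3 ∈ K[x,y,z] be homogeneous polynomials with deg f_i = d_i and deg g_i = k − d_i, where d_1 + d_2 + d_3 = 2k and k ≥ d_i for i = 1,2,3, and suppose the radicals of (f_1,f_2,f_3) and of (g_1,g_2,g_3) both equal (x,y,z). Set F = f_1g_1 + f_2g_2 + f_3g_3 and suppose R = K[x,y,z]/(F) is a normal integral domain. Then in R the tight closure and the plus closure of (f_1,f_2,f_3) coincide, (f_1,f_2,f_3)^* = (f_1,f_2,f_3)^+, and every homogeneous element of degree ≥ k belongs to (f_1,f_2,f_3)^*. -/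

import Mathlib

/-!
Write `R = K[x,y,z]/(F)`, let `Ω` be an algebraic closure of its fraction field, and let
`C = Proj R`, a plane curve. All cohomological arguments take place inside `Ω`, that is, on the
absolute integral closure of `C`.

**Geometry.** Projection from a point off the curve presents `C` as a finite cover of the
projective line with homogeneous coordinates `u, v`. The integral closures `chartRing` of
`K[v/u]` and `K[u/v]` in `Ω` play the role of the two affine charts of the absolute integral
closure, and `twist` gives the sections of `𝒪(n)` on them. A homogeneous element `r` of degree `m`
lies in the plus closure of `(f₀,f₁,f₂)` once `r = ∑ fᵢ wᵢ` with `wᵢ` a global section of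
`𝒪(m - dᵢ)` on both charts, for such `wᵢ` are integral over `R`. Local solutions exist since
`(f₀,f₁,f₂)` is primary to the irrelevant ideal; the obstruction to gluing is a class in `H¹` of
the syzygy bundle. As `∑ fᵢ gᵢ = 0` on `C`, that bundle is an extension of `𝒪(m-k)` by `𝒪(m-k)`:
the inclusion is `g`, and the quotient map sends a syzygy `h` to the scalar `l` with `h × g = l f`
(this uses `d₀ + d₁ + d₂ = 2 * k`). So gluing is done by splitting twice a section of `𝒪(m-k)` on the
overlap of the charts.

**Splitting.** If `m ≥ k`, every overlap section splits: modulo the functions that split, the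
Frobenius orbit of a function spans a finite-dimensional space, so the function satisfies an
additive polynomial equation up to a sum `α + β`, and solving that equation in `Ω` with right-hand
side `α` and `β` splits it (`exists_chartRing_add`). If `m < k`, a tight closure relation
`a r^q = ∑ cᵢ fᵢ^q` says that `a` kills all Frobenius pullbacks of the class. In negative degree
there are no global sections, so the splittings of the `q`-th powers are unique and compatible;
dividing by `a` and taking a `q`-th root gives a splitting whose parts are almost integral, hence
integral, over a Noetherian chart (`exists_twist_add_of_tight`). The two steps are combined in
`exists_glued_solution` and transferred to polynomials in `exists_integral_solution`.

**Nonvanishing of `F`.** That `F ≠ 0` follows from the same extension argument on the punctured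
affine three-space, where `H¹(𝒪) = 0` (`sum_mul_ne_zero`).

**Conclusion.** Tight closure is homogeneous (`exists_homogeneous_multiplier`), so
`exists_integral_solution` shows that it is contained in the plus closure; it also shows that all
homogeneous elements of degree at least `k` are in the plus closure. The inclusion of the plus
closure in the tight closure is the standard one, by a linear form on a finite extension
(`plusClosure_subset_tightClosure`).
-/

open MvPolynomial

/-- The Frobenius power `I^[q]` of an ideal. -/
def bracketPow {R : Type} [CommRing R] (I : Ideal R) (q : ℕ) : Ideal R :=
  Ideal.span ((fun a => a ^ q) '' (I : Set R))

/-- The tight closure of an ideal `I` in characteristic `p`. -/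
def tightClosure {R : Type} [CommRing R] (p : ℕ) (I : Ideal R) : Set R :=
  {f | ∃ c : R, c ≠ 0 ∧ ∃ e₀ : ℕ, ∀ e ≥ e₀, c * f ^ p ^ e ∈ bracketPow I (p ^ e)}

/-- The plus closure of an ideal `I`: all `f` contained in `IS` for some module-finite
extension of integral domains `R ⊆ S`. -/
def plusClosure (R : Type) [CommRing R] (I : Ideal R) : Set R :=
  {f | ∃ (S : Type) (_ : CommRing S) (_ : IsDomain S) (φ : R →+* S),
    Function.Injective φ ∧ φ.Finite ∧ φ f ∈ I.map φ}

/-! ### Integrality by valuations -/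

/-- The integral closure of the image of `A` in a field is the intersection of the valuation rings
containing that image. -/
theorem isIntegral_iff_forall_valuationSubring {A Ω : Type*} [CommRing A] [Field Ω] [Algebra A Ω]
    (x : Ω) : IsIntegral A x ↔
      ∀ V : ValuationSubring Ω, (∀ a : A, algebraMap A Ω a ∈ V) → x ∈ V := by
  constructor
  · intro hx V hV
    obtain ⟨P, hP, hP0⟩ := hx
    let φ : A →+* V := (algebraMap A Ω).codRestrict V.toSubring hV
    have h2 : IsIntegral V x := by
      refine ⟨P.map φ, hP.map _, ?_⟩
      rw [Polynomial.eval₂_map]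
      exact hP0
    obtain ⟨y, hy⟩ := IsIntegrallyClosed.isIntegral_iff.mp h2
    rw [← hy]
    exact y.2
  · intro h
    have h1 : x ∈ (integralClosure (Subring.closure (Set.range (algebraMap A Ω))) Ω).toSubring := by
      rw [← iInf_valuationSubring_superset]
      rw [Subring.mem_iInf]
      rintro ⟨V, hV⟩
      exact h V fun a => hV ⟨a, rfl⟩
    obtain ⟨P, hP, hP0⟩ := h1
    have hs : Subring.closure (Set.range (algebraMap A Ω)) ≤ (algebraMap A Ω).range := by
      rw [Subring.closure_le]; rintro _ ⟨a, rfl⟩; exact ⟨a, rfl⟩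
    have h2 : (algebraMap A Ω).range.subtype.IsIntegralElem x := by
      refine ⟨P.map (Subring.inclusion hs), hP.map _, ?_⟩
      rw [Polynomial.eval₂_map]
      exact hP0
    have h3 : IsIntegral (algebraMap A Ω).range x := h2
    let _ : Algebra A (algebraMap A Ω).range := (algebraMap A Ω).rangeRestrict.toAlgebra
    have : IsScalarTower A (algebraMap A Ω).range Ω := IsScalarTower.of_algebraMap_eq fun a => rfl
    have : Algebra.IsIntegral A (algebraMap A Ω).range :=
      Algebra.isIntegral_of_surjective (algebraMap A Ω).rangeRestrict_surjective
    exact isIntegral_trans x h3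

/-! ### Charts of the absolute integral closure of a curve -/

section Charts

variable (K : Type*) {Ω : Type*} [Field K] [Field Ω] [Algebra K Ω]

/-- The integral closure of `K[t]` in `Ω`. For `t = v / u` it serves as the ring of functions on
the chart `u ≠ 0` of the absolute integral closure of a curve over the projective line. -/
def chartRing (t : Ω) : Subalgebra K Ω :=
  (integralClosure (Algebra.adjoin K {t}) Ω).restrictScalars K

variable {K}

theorem mem_chartRing_iff {t x : Ω} : x ∈ chartRing K t ↔
    ∀ V : ValuationSubring Ω, (∀ c : K, algebraMap K Ω c ∈ V) → t ∈ V → x ∈ V := by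
  have h : x ∈ chartRing K t ↔ IsIntegral (Algebra.adjoin K {t}) x := Iff.rfl
  rw [h, isIntegral_iff_forall_valuationSubring]
  refine forall_congr' fun V => ⟨fun H hK ht => H fun a => ?_, fun H hA => H (fun c => ?_) ?_⟩
  · obtain ⟨a, ha⟩ := a
    change a ∈ V
    induction ha using Algebra.adjoin_induction with
    | mem x hx => rw [Set.mem_singleton_iff.mp hx]; exact ht
    | algebraMap r => exact hK r
    | add x y _ _ hx hy => exact add_mem hx hy
    | mul x y _ _ hx hy => exact mul_mem hx hy
  · exact hA (algebraMap K _ c)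
  · exact hA ⟨t, Algebra.subset_adjoin rfl⟩

theorem self_mem_chartRing (t : Ω) : t ∈ chartRing K t :=
  mem_chartRing_iff.mpr fun _ _ h => h

theorem mem_chartRing_of_isIntegral {t x : Ω} {B : Subalgebra K Ω} (hB : B ≤ chartRing K t)
    (hx : IsIntegral B x) : x ∈ chartRing K t := by
  rw [mem_chartRing_iff]
  intro V hK ht
  exact (isIntegral_iff_forall_valuationSubring x).mp hx V
    fun a => mem_chartRing_iff.mp (hB a.2) V hK ht

theorem isIntegral_of_monic_of_coeff_mem (S : Subalgebra K Ω) (Q : Polynomial Ω) (hQ : Q.Monic)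
    (hc : ∀ i, Q.coeff i ∈ S) {x : Ω} (hx : Q.eval x = 0) : IsIntegral S x := by
  have h : (↑Q.coeffs : Set Ω) ⊆ S.toSubring := by
    intro c hc'
    obtain ⟨n, -, rfl⟩ := Polynomial.mem_coeffs_iff.mp hc'
    exact hc n
  refine ⟨Q.toSubring S.toSubring h, (Polynomial.monic_toSubring Q _ h).mpr hQ, ?_⟩
  have : (Q.toSubring S.toSubring h).map S.toSubring.subtype = Q := by
    ext n
    rw [Polynomial.coeff_map]
    exact Polynomial.coeff_toSubring Q _ h
  change Polynomial.eval₂ S.toSubring.subtype x _ = 0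
  rw [← Polynomial.eval_map, this, hx]

/-- In a sequence of elements of a Noetherian module some member is a linear combination of its
predecessors. -/
theorem exists_eq_sum_of_isNoetherian {A M : Type*} [Ring A] [AddCommGroup M] [Module A M]
    (N : Submodule A M) [IsNoetherian A N] (v : ℕ → M) (hv : ∀ i, v i ∈ N) :
    ∃ n, ∃ a : ℕ → A, v n = ∑ i ∈ Finset.range n, a i • v i := by
  let w : ℕ → N := fun i => ⟨v i, hv i⟩
  let c : ℕ →o Submodule A N :=
    ⟨fun n => Submodule.span A (w '' Set.Iio n), fun a b h =>
      Submodule.span_mono (Set.image_mono (Set.Iio_subset_Iio h))⟩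
  obtain ⟨n, hn⟩ := monotone_stabilizes_iff_noetherian.mpr ‹IsNoetherian A N› c
  refine ⟨n, ?_⟩
  have h1 : w n ∈ c n := by
    rw [hn (n + 1) (by omega)]
    exact Submodule.subset_span ⟨n, by simp, rfl⟩
  have h2 : w n ∈ Submodule.span A (w '' (Finset.range n : Finset ℕ)) := by
    rw [Finset.coe_range]; exact h1
  obtain ⟨a, ha⟩ := (Submodule.mem_span_image_finset_iff_exists_fun A).mp h2
  refine ⟨fun i => if h : i ∈ Finset.range n then a ⟨i, h⟩ else 0, ?_⟩
  have h3 := congrArg (Submodule.subtype N) ha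
  rw [map_sum] at h3
  change _ = v n at h3
  rw [← h3, ← Finset.sum_coe_sort (Finset.range n)]
  refine Finset.sum_congr rfl fun i _ => ?_
  simp only [Finset.coe_mem, dif_pos]
  rfl

theorem exists_pow_inv_mul_mem_of_mem_adjoin {t c : Ω} (ht : t ≠ 0)
    (hc : c ∈ Algebra.adjoin K {t}) :
    ∃ N : ℕ, ∀ n ≥ N, t⁻¹ ^ n * c ∈ chartRing K t⁻¹ := by
  have hinv := self_mem_chartRing (K := K) t⁻¹
  induction hc using Algebra.adjoin_induction with
  | mem x hx =>
    rw [Set.mem_singleton_iff.mp hx]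
    refine ⟨1, fun n hn => ?_⟩
    obtain ⟨m, rfl⟩ := Nat.exists_eq_add_of_le' hn
    rw [pow_succ, mul_assoc, inv_mul_cancel₀ ht, mul_one]
    exact pow_mem hinv m
  | algebraMap r => exact ⟨0, fun n _ => mul_mem (pow_mem hinv n) (Subalgebra.algebraMap_mem _ r)⟩
  | add x y _ _ hx hy =>
    obtain ⟨N, hN⟩ := hx
    obtain ⟨M, hM⟩ := hy
    refine ⟨N + M, fun n hn => ?_⟩
    rw [mul_add]
    exact add_mem (hN n (by omega)) (hM n (by omega))
  | mul x y _ _ hx hy =>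
    obtain ⟨N, hN⟩ := hx
    obtain ⟨M, hM⟩ := hy
    refine ⟨N + M, fun n hn => ?_⟩
    obtain ⟨m, rfl⟩ := Nat.exists_eq_add_of_le' hn
    have := mul_mem (hN (m + N) (by omega)) (hM M le_rfl)
    convert this using 1
    ring

/-- A function on the chart with coordinate `t` has a pole of bounded order along `t⁻¹ = 0` on the
other chart. -/
theorem exists_pow_inv_mul_mem {t x : Ω} (ht : t ≠ 0) (hx : x ∈ chartRing K t) :
    ∃ N : ℕ, ∀ n ≥ N, t⁻¹ ^ n * x ∈ chartRing K t⁻¹ := by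
  have hinv := self_mem_chartRing (K := K) t⁻¹
  obtain ⟨P, hP, hP0⟩ : IsIntegral (Algebra.adjoin K {t}) x := hx
  choose N hN using fun i => exists_pow_inv_mul_mem_of_mem_adjoin ht (P.coeff i).2
  let D := ∑ i ∈ Finset.range P.natDegree, N i
  refine ⟨D, fun n hn => ?_⟩
  let Q : Polynomial Ω := (P.map (algebraMap _ Ω)).scaleRoots (t⁻¹ ^ n)
  have hQ : Q.Monic := (Polynomial.monic_scaleRoots_iff _).mpr (hP.map _)
  have hQ0 : Q.eval (t⁻¹ ^ n * x) = 0 := by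
    have := Polynomial.scaleRoots_eval₂_eq_zero (RingHom.id Ω) (r := x) (s := t⁻¹ ^ n)
      (p := P.map (algebraMap _ Ω)) (by rw [Polynomial.eval₂_map]; exact hP0)
    simpa [Q, Polynomial.eval₂_id] using this
  refine mem_chartRing_of_isIntegral le_rfl (isIntegral_of_monic_of_coeff_mem _ Q hQ ?_ hQ0)
  intro i
  simp only [Q, Polynomial.coeff_scaleRoots, Polynomial.coeff_map, hP.natDegree_map]
  rcases lt_trichotomy i P.natDegree with h | h | h
  · obtain ⟨m, hm⟩ : ∃ m, P.natDegree - i = m + 1 := ⟨P.natDegree - i - 1, by omega⟩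
    rw [hm, pow_succ, mul_left_comm, mul_comm _ (t⁻¹ ^ n)]
    refine mul_mem (pow_mem (pow_mem hinv n) m) (hN i n (le_trans ?_ hn))
    exact Finset.single_le_sum (f := N) (fun _ _ => Nat.zero_le _) (Finset.mem_range.mpr h)
  · subst h
    simp [hP.coeff_natDegree]
  · rw [Polynomial.coeff_eq_zero_of_natDegree_lt h]; simp

/-- The polynomial `z ^ pⁿ - ∑ cᵢ z ^ pⁱ - w` is monic and nonconstant, with coefficients in every
subalgebra that contains `w` and the `cᵢ`. -/
theorem exists_additive_polynomial {p : ℕ} (hp : p.Prime) (c : ℕ → Ω) (n : ℕ) (w : Ω) :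
    ∃ Q : Polynomial Ω, Q.Monic ∧ Q.degree ≠ 0 ∧
      (∀ z, Q.eval z =
        z ^ p ^ n - ∑ i ∈ Finset.range n, c i * z ^ p ^ i - w) ∧
      ∀ S : Subalgebra K Ω, w ∈ S → (∀ i, c i ∈ S) → ∀ i, Q.coeff i ∈ S := by
  let q : Polynomial Ω :=
    ∑ i ∈ Finset.range n, Polynomial.C (c i) * Polynomial.X ^ p ^ i + Polynomial.C w
  have hq : q.degree < (p ^ n : ℕ) := by
    refine lt_of_le_of_lt (Polynomial.degree_add_le _ _) (max_lt ?_ ?_)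
    · refine (Polynomial.degree_sum_le _ _).trans_lt ?_
      rw [Finset.sup_lt_iff (WithBot.bot_lt_coe _)]
      intro i hi
      refine (Polynomial.degree_C_mul_X_pow_le _ _).trans_lt ?_
      exact_mod_cast Nat.pow_lt_pow_right hp.one_lt (Finset.mem_range.mp hi)
    · refine Polynomial.degree_C_le.trans_lt ?_
      exact_mod_cast pow_pos hp.pos n
  refine ⟨Polynomial.X ^ p ^ n - q, Polynomial.monic_X_pow_sub hq, ?_, ?_, ?_⟩
  · rw [Polynomial.degree_sub_eq_left_of_degree_lt (by rwa [Polynomial.degree_X_pow]),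
      Polynomial.degree_X_pow]
    exact_mod_cast (pow_pos hp.pos n).ne'
  · intro z
    simp [q, Polynomial.eval_finsetSum, sub_sub]
  · intro S hw hc i
    simp only [q, Polynomial.coeff_sub, Polynomial.coeff_add, Polynomial.finsetSum_coeff,
      Polynomial.coeff_C_mul, Polynomial.coeff_X_pow, Polynomial.coeff_C]
    refine sub_mem (by split_ifs <;> simp) (add_mem (sum_mem fun j _ => ?_) (by split_ifs <;> simp [hw]))
    exact mul_mem (hc j) (by split_ifs <;> simp)

/-- `H¹` of the structure sheaf of the absolute integral closure vanishes: a function on the overlap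
of the two charts is a sum of a function on each. The powers of `x` lie in a finite-dimensional
space modulo `chartRing K t + chartRing K t⁻¹`, so that `x` is, up to such a sum `α + β`, a root of
an additive polynomial; its roots with right-hand side `α` and `β` split `x`. -/
theorem exists_chartRing_add (p : ℕ) [Fact p.Prime] [CharP Ω p] [IsAlgClosed Ω] {t x : Ω}
    (ht : t ≠ 0) (N : ℕ) (hx : t ^ N * x ∈ chartRing K t) :
    ∃ α ∈ chartRing K t, ∃ β ∈ chartRing K t⁻¹, x = α + β := by
  classical
  have hself := self_mem_chartRing (K := K) t
  have hp := (Fact.out : p.Prime)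
  set y := t ^ N * x with hy
  have hyint : IsIntegral (Algebra.adjoin K {t}) y := hx
  obtain ⟨s, hs⟩ := hyint.fg_adjoin_singleton
  have hsO : ∀ g ∈ s, g ∈ chartRing K t := by
    intro g hg
    have h1 : g ∈ Subalgebra.toSubmodule (Algebra.adjoin (Algebra.adjoin K {t}) {y}) := by
      rw [← hs]; exact Submodule.subset_span hg
    have h2 : Algebra.adjoin (Algebra.adjoin K {t}) {y} ≤
        integralClosure (Algebra.adjoin K {t}) Ω :=
      Algebra.adjoin_le (by rintro _ rfl; exact hx)
    exact h2 h1
  choose! M hM using fun g (hg : g ∈ s) => exists_pow_inv_mul_mem ht (hsO g hg)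
  -- `U` consists of the functions that split; `T` adds finitely many functions to it
  let D := ∑ g ∈ s, M g
  let U : Submodule K Ω := Subalgebra.toSubmodule (chartRing K t) ⊔
    Subalgebra.toSubmodule (chartRing K t⁻¹)
  let G : Finset Ω := (Finset.range D ×ˢ s).image fun z => t⁻¹ ^ z.1 * z.2
  let T : Submodule K Ω := U ⊔ Submodule.span K (G : Set Ω)
  have hmono : ∀ g ∈ s, ∀ a b : ℕ, t⁻¹ ^ a * (t ^ b * g) ∈ T := by
    intro g hg a b
    rcases le_total a b with h | h
    · obtain ⟨c, rfl⟩ := Nat.exists_eq_add_of_le h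
      have : t⁻¹ ^ a * (t ^ (a + c) * g) = t ^ c * g := by
        rw [pow_add, inv_pow]; field_simp
      rw [this]
      exact Submodule.mem_sup_left (Submodule.mem_sup_left
        ((chartRing K t).mul_mem (pow_mem hself c) (hsO g hg)))
    · obtain ⟨c, rfl⟩ := Nat.exists_eq_add_of_le h
      have : t⁻¹ ^ (b + c) * (t ^ b * g) = t⁻¹ ^ c * g := by
        rw [pow_add, inv_pow t b]; field_simp
      rw [this]
      by_cases hc : c < D
      · exact Submodule.mem_sup_right (Submodule.subset_span
          (Finset.mem_coe.mpr (Finset.mem_image.mpr ⟨(c, g), by simp [hc, hg], rfl⟩)))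
      · refine Submodule.mem_sup_left (Submodule.mem_sup_right (hM g hg c (le_trans ?_ (not_lt.mp hc))))
        exact Finset.single_le_sum (f := M) (fun _ _ => Nat.zero_le _) hg
  have hT : ∀ z ∈ Submodule.span (Algebra.adjoin K {t}) (s : Set Ω),
      ∀ c ∈ Algebra.adjoin K {t}, ∀ a : ℕ, t⁻¹ ^ a * (c * z) ∈ T := by
    intro z hz
    induction hz using Submodule.span_induction with
    | zero => simp
    | add z w _ _ hz hw =>
      intro c hc a
      rw [mul_add, mul_add]; exact add_mem (hz c hc a) (hw c hc a)
    | smul c' z _ hz =>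
      intro c hc a
      have : c * (c' • z) = (c * (c' : Ω)) * z := by
        rw [Algebra.smul_def, mul_assoc]; rfl
      rw [this]
      exact hz _ (mul_mem hc c'.2) a
    | mem g hg =>
      intro c hc a
      rw [Algebra.adjoin_singleton_eq_range_aeval] at hc
      obtain ⟨P, rfl⟩ := hc
      change t⁻¹ ^ a * (Polynomial.aeval t P * g) ∈ T
      rw [Polynomial.aeval_eq_sum_range, Finset.sum_mul, Finset.mul_sum]
      refine sum_mem fun b _ => ?_
      rw [smul_mul_assoc, mul_smul_comm]
      exact T.smul_mem _ (hmono g hg a b)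
  have hxT : ∀ m : ℕ, x ^ m ∈ T := by
    intro m
    have h1 : y ^ m ∈ Submodule.span (Algebra.adjoin K {t}) (s : Set Ω) := by
      rw [hs]
      exact pow_mem (Algebra.subset_adjoin (R := Algebra.adjoin K {t}) (Set.mem_singleton y)) m
    have h2 := hT _ h1 1 (one_mem _) (N * m)
    have h3 : t⁻¹ ^ (N * m) * (1 * y ^ m) = x ^ m := by
      rw [hy, mul_pow, ← pow_mul, one_mul, ← mul_assoc, ← mul_pow, inv_mul_cancel₀ ht, one_pow,
        one_mul]
    rwa [h3] at h2
  -- modulo `U`, the Frobenius orbit of `x` lives in a finite-dimensional space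
  let W : Submodule K (Ω ⧸ U) := Submodule.span K (G.image U.mkQ : Set (Ω ⧸ U))
  have hW : ∀ m : ℕ, U.mkQ (x ^ m) ∈ W := by
    intro m
    obtain ⟨a, ha, b, hb, hab⟩ := Submodule.mem_sup.mp (hxT m)
    rw [← hab, map_add, Submodule.mkQ_apply, (Submodule.Quotient.mk_eq_zero U).mpr ha, zero_add]
    have := Submodule.mem_map_of_mem (f := U.mkQ) hb
    rw [Submodule.map_span] at this
    simpa [W] using this
  have : IsNoetherian K W := by
    have : Module.Finite K W := Module.Finite.span_finset K _
    infer_instance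
  obtain ⟨n, c, hc⟩ := exists_eq_sum_of_isNoetherian W (fun e => U.mkQ (x ^ p ^ e)) fun e => hW _
  have hcU : x ^ p ^ n - ∑ i ∈ Finset.range n, algebraMap K Ω (c i) * x ^ p ^ i ∈ U := by
    rw [← Submodule.Quotient.mk_eq_zero, ← Submodule.mkQ_apply, map_sub, map_sum, hc, sub_eq_zero]
    refine Finset.sum_congr rfl fun i _ => ?_
    rw [← Algebra.smul_def, map_smul]
  obtain ⟨α, hα, β, hβ, hαβ⟩ := Submodule.mem_sup.mp hcU
  -- split `x` using a root of the additive polynomial with right-hand side `α`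
  obtain ⟨Q, hQm, hQd, hQe, hQc⟩ :=
    exists_additive_polynomial (K := K) hp (fun i => algebraMap K Ω (c i)) n α
  obtain ⟨γ, hγ⟩ := IsAlgClosed.exists_root Q hQd
  obtain ⟨Q', hQm', -, hQe', hQc'⟩ :=
    exists_additive_polynomial (K := K) hp (fun i => algebraMap K Ω (c i)) n β
  refine ⟨γ, mem_chartRing_of_isIntegral le_rfl
    (isIntegral_of_monic_of_coeff_mem _ Q hQm (hQc _ hα fun i => Subalgebra.algebraMap_mem _ _) hγ), x - γ,
    mem_chartRing_of_isIntegral le_rfl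
    (isIntegral_of_monic_of_coeff_mem _ Q' hQm' (hQc' _ hβ fun i => Subalgebra.algebraMap_mem _ _) ?_), by ring⟩
  have h1 := hQe γ
  rw [hγ] at h1
  rw [hQe']
  simp only [sub_pow_char_pow, mul_sub, Finset.sum_sub_distrib]
  linear_combination h1 - hαβ

/-! ### Twisted sections on the two charts -/

/-- Sections of `𝒪(n)` on a chart with ring of functions `B`, where `u` is the generator of
`𝒪(1)`: the elements of `uⁿ B`. -/
def twist (u : Ω) (B : Subalgebra K Ω) (n : ℤ) : Submodule K Ω where
  carrier := {x | x * u ^ (-n) ∈ B}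
  add_mem' := fun {a b} ha hb => by
    simp only [Set.mem_ofPred_eq, add_mul] at *
    exact add_mem ha hb
  zero_mem' := by simp
  smul_mem' := fun c x hx => by
    simp only [Set.mem_ofPred_eq, smul_mul_assoc] at *
    exact B.smul_mem hx c

theorem mem_twist {u : Ω} {B : Subalgebra K Ω} {n : ℤ} {x : Ω} :
    x ∈ twist u B n ↔ x * u ^ (-n) ∈ B := Iff.rfl

theorem twist_mono (u : Ω) {B B' : Subalgebra K Ω} (h : B ≤ B') (n : ℤ) :
    twist u B n ≤ twist u B' n := fun _ hx => h hx

theorem mul_mem_twist {u : Ω} (hu : u ≠ 0) {B : Subalgebra K Ω} {m n l : ℤ} {x y : Ω}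
    (hx : x ∈ twist u B m) (hy : y ∈ twist u B n) (hl : m + n = l) : x * y ∈ twist u B l := by
  subst hl
  rw [mem_twist] at *
  have := mul_mem hx hy
  rwa [mul_mul_mul_comm, ← zpow_add₀ hu, ← neg_add] at this

theorem pow_mem_twist {u : Ω} {B : Subalgebra K Ω} {n : ℤ} {x : Ω}
    (hx : x ∈ twist u B n) (m : ℕ) : x ^ m ∈ twist u B (m * n) := by
  rw [mem_twist] at *
  have := pow_mem hx m
  rwa [mul_pow, ← zpow_natCast (u ^ (-n)), ← zpow_mul, show -n * (m : ℤ) = -(m * n) by ring] at this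

theorem mem_twist_of_pow_mem {u t : Ω} {n : ℤ} {x : Ω} {m : ℕ} (hm : 0 < m)
    (hx : x ^ m ∈ twist u (chartRing K t) (m * n)) : x ∈ twist u (chartRing K t) n := by
  rw [mem_twist] at *
  have h : (x * u ^ (-n)) ^ m ∈ chartRing K t := by
    rwa [mul_pow, ← zpow_natCast (u ^ (-n)), ← zpow_mul, show -n * (m : ℤ) = -(m * n) by ring]
  have h1 : IsIntegral (Algebra.adjoin K {t}) ((x * u ^ (-n)) ^ m) := h
  exact h1.of_pow hm

variable (K) in
/-- The localization of `chartRing K t` at `t`, for `t ≠ 0`: functions on the overlap of the charts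
with coordinates `t` and `t⁻¹`. -/
def overlapRing (t : Ω) : Subalgebra K Ω where
  carrier := {x | ∃ N : ℕ, t ^ N * x ∈ chartRing K t}
  mul_mem' := by
    rintro a b ⟨N, hN⟩ ⟨M, hM⟩
    exact ⟨N + M, by convert mul_mem hN hM using 1; ring⟩
  add_mem' := by
    rintro a b ⟨N, hN⟩ ⟨M, hM⟩
    have ht := self_mem_chartRing (K := K) t
    refine ⟨N + M, ?_⟩
    convert add_mem (mul_mem (pow_mem ht M) hN) (mul_mem (pow_mem ht N) hM) using 1
    ring
  algebraMap_mem' := fun r => ⟨0, by simp⟩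

theorem chartRing_le_overlapRing (t : Ω) : chartRing K t ≤ overlapRing K t :=
  fun x hx => ⟨0, by simpa using hx⟩

theorem twist_le_overlap {u v : Ω} (hu : u ≠ 0) (hv : v ≠ 0) (n : ℤ) :
    twist v (chartRing K (u / v)) n ≤ twist u (overlapRing K (v / u)) n := by
  intro x hx
  rw [mem_twist] at *
  have ht : v / u ≠ 0 := div_ne_zero hv hu
  have h1 : x * v ^ (-n) ∈ overlapRing K (v / u) := by
    obtain ⟨N, hN⟩ := exists_pow_inv_mul_mem (div_ne_zero hu hv) hx
    rw [inv_div] at hN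
    exact ⟨N, hN N le_rfl⟩
  have h2 : v / u ∈ overlapRing K (v / u) :=
    chartRing_le_overlapRing _ (self_mem_chartRing _)
  have h3 : (v / u)⁻¹ ∈ overlapRing K (v / u) := ⟨1, by rw [pow_one, mul_inv_cancel₀ ht]; exact one_mem _⟩
  have h4 : (v / u) ^ n ∈ overlapRing K (v / u) := by
    obtain ⟨m, rfl | rfl⟩ := n.eq_nat_or_neg
    · rw [zpow_natCast]; exact pow_mem h2 m
    · rw [zpow_neg, zpow_natCast, ← inv_pow]; exact pow_mem h3 m
  convert mul_mem h1 h4 using 1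
  rw [div_zpow, zpow_neg, zpow_neg]
  have := zpow_ne_zero n hv
  have := zpow_ne_zero n hu
  field_simp

/-- Every section of `𝒪(n)`, `n ≥ 0`, on the overlap splits. -/
theorem exists_twist_add (p : ℕ) [Fact p.Prime] [CharP Ω p] [IsAlgClosed Ω] {u v : Ω}
    (hu : u ≠ 0) (hv : v ≠ 0) {n : ℤ} (hn : 0 ≤ n) {x : Ω}
    (hx : x ∈ twist u (overlapRing K (v / u)) n) :
    ∃ α ∈ twist u (chartRing K (v / u)) n, ∃ β ∈ twist v (chartRing K (u / v)) n, x = α + β := by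
  obtain ⟨N, hN⟩ := mem_twist.mp hx
  obtain ⟨α, hα, β, hβ, h⟩ := exists_chartRing_add p (div_ne_zero hv hu) N hN
  rw [inv_div] at hβ
  have hun := zpow_ne_zero n hu
  have hvn := zpow_ne_zero n hv
  refine ⟨α * u ^ n, ?_, β * u ^ n, ?_, ?_⟩
  · rw [mem_twist, zpow_neg, mul_inv_cancel_right₀ hun]
    exact hα
  · rw [mem_twist, mul_assoc, zpow_neg, ← div_eq_mul_inv, ← div_zpow]
    lift n to ℕ using hn
    rw [zpow_natCast]
    exact mul_mem hβ (pow_mem (self_mem_chartRing _) n)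
  · rw [← add_mul, ← h, zpow_neg, inv_mul_cancel_right₀ hun]

theorem mem_range_algebraMap_of_isIntegral [IsAlgClosed K] {x : Ω} (hx : IsIntegral K x) :
    x ∈ Set.range (algebraMap K Ω) :=
  minpoly.mem_range_of_degree_eq_one K x
    (IsAlgClosed.degree_eq_one_of_irreducible K (minpoly.irreducible hx))

/-- A global function is constant. -/
theorem mem_range_of_mem_both [IsAlgClosed K] {u v x : Ω}
    (h1 : x ∈ chartRing K (v / u)) (h2 : x ∈ chartRing K (u / v)) :
    x ∈ Set.range (algebraMap K Ω) := by
  have h : IsIntegral K x := by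
    rw [isIntegral_iff_forall_valuationSubring]
    intro V hV
    rcases V.mem_or_inv_mem (v / u) with h | h
    · exact mem_chartRing_iff.mp h1 V hV h
    · rw [inv_div] at h
      exact mem_chartRing_iff.mp h2 V hV h
  exact mem_range_algebraMap_of_isIntegral h

/-- There are no nonzero global sections of `𝒪(n)` for `n < 0`. -/
theorem eq_zero_of_mem_twist [IsAlgClosed K] {u v : Ω} (hu : u ≠ 0) (hv : v ≠ 0)
    (ht : v / u ∉ Set.range (algebraMap K Ω)) {n : ℤ} (hn : n < 0) {x : Ω}
    (h1 : x ∈ twist u (chartRing K (v / u)) n) (h2 : x ∈ twist v (chartRing K (u / v)) n) :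
    x = 0 := by
  by_contra hx
  obtain ⟨j, rfl⟩ : ∃ j : ℕ, n = -(j + 1 : ℕ) := ⟨(-n - 1).toNat, by omega⟩
  rw [mem_twist, neg_neg, zpow_natCast] at h1 h2
  have h3 : x * u ^ (j + 1) ∈ chartRing K (u / v) := by
    convert mul_mem h2 (pow_mem (self_mem_chartRing (K := K) (u / v)) (j + 1)) using 1
    rw [div_pow]
    field_simp
  have h4 : x * v ^ (j + 1) ∈ chartRing K (v / u) := by
    convert mul_mem h1 (pow_mem (self_mem_chartRing (K := K) (v / u)) (j + 1)) using 1
    rw [div_pow]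
    field_simp
  obtain ⟨a, ha⟩ := mem_range_of_mem_both h1 h3
  obtain ⟨b, hb⟩ := mem_range_of_mem_both h4 h2
  have h5 : (v / u) ^ (j + 1) = algebraMap K Ω (b / a) := by
    rw [map_div₀, ha, hb, div_pow]
    field_simp
  have h6 : IsIntegral K (v / u) := by
    refine IsIntegral.of_pow (Nat.succ_pos j) ?_
    rw [h5]
    exact isIntegral_algebraMap
  exact ht (mem_range_algebraMap_of_isIntegral h6)

/-- An element which is almost integral over a Noetherian subring of the chart, in the weak sense
that one multiplier works for all its `pᵉ`-th powers, is integral. -/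
theorem mem_twist_of_noetherian {p : ℕ} (hp : p.Prime) {u t : Ω} (hu : u ≠ 0) {B : Subalgebra K Ω}
    (hB : B ≤ chartRing K t) [IsNoetherianRing B] {a γ : Ω} (ha : a ≠ 0) {d n : ℤ}
    (h : ∀ e : ℕ, a * γ ^ p ^ e ∈ twist u B (d + (p ^ e : ℕ) * n)) :
    γ ∈ twist u (chartRing K t) n := by
  rw [mem_twist]
  set y := γ * u ^ (-n) with hy
  set b := a * u ^ (-d) with hb
  have hb0 : b ≠ 0 := mul_ne_zero ha (zpow_ne_zero _ hu)
  have h1 : ∀ e : ℕ, b * y ^ p ^ e ∈ B := by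
    intro e
    have := mem_twist.mp (h e)
    convert this using 1
    rw [hb, hy, mul_pow, ← zpow_natCast (u ^ (-n)), ← zpow_mul, mul_mul_mul_comm, ← zpow_add₀ hu]
    congr 2
    ring
  have : IsNoetherian B (Submodule.span B {b⁻¹}) :=
    isNoetherian_of_fg_of_noetherian _ (Submodule.fg_span_singleton _)
  obtain ⟨m, c, hc⟩ := exists_eq_sum_of_isNoetherian (Submodule.span B {b⁻¹})
    (fun e => y ^ p ^ e) fun e => by
      rw [Submodule.mem_span_singleton]
      refine ⟨⟨_, h1 e⟩, ?_⟩
      change b * y ^ p ^ e * b⁻¹ = _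
      field_simp
  obtain ⟨Q, hQm, -, hQe, hQc⟩ :=
    exists_additive_polynomial (K := K) hp (fun i => (c i : Ω)) m 0
  refine mem_chartRing_of_isIntegral hB
    (isIntegral_of_monic_of_coeff_mem B Q hQm (hQc _ (zero_mem _) fun i => (c i).2) ?_)
  rw [hQe, sub_zero, sub_eq_zero, hc]
  rfl

/-- An overlap section `x` of `𝒪(n)`, `n < 0`, splits if a fixed multiplier `a` splits all `x ^ pᵉ`
over fixed Noetherian subrings of the charts. By the absence of global sections in negative degree
the splittings `a x ^ pᵉ = α e - β e` satisfy `α e ^ p = a ^ (p - 1) α (e + 1)`, so `α e₁ / a` is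
almost integral, and its `p ^ e₁`-th root is a component of `x`. -/
theorem exists_twist_add_of_tight [IsAlgClosed K] (p : ℕ) [Fact p.Prime] [CharP Ω p]
    [IsAlgClosed Ω] {u v : Ω} (hu : u ≠ 0) (hv : v ≠ 0)
    (ht : v / u ∉ Set.range (algebraMap K Ω)) {Bu Bv : Subalgebra K Ω}
    (hBu : Bu ≤ chartRing K (v / u)) (hBv : Bv ≤ chartRing K (u / v))
    [IsNoetherianRing Bu] [IsNoetherianRing Bv] {d n : ℤ} (hn : n < 0) {a x : Ω} (ha : a ≠ 0)
    (hau : a ∈ twist u (chartRing K (v / u)) d) (hav : a ∈ twist v (chartRing K (u / v)) d)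
    (e₀ : ℕ) (h : ∀ e ≥ e₀, ∃ α ∈ twist u Bu (d + (p ^ e : ℕ) * n),
      ∃ β ∈ twist v Bv (d + (p ^ e : ℕ) * n), a * x ^ p ^ e = α - β) :
    ∃ α ∈ twist u (chartRing K (v / u)) n, ∃ β ∈ twist v (chartRing K (u / v)) n, x = α + β := by
  have hp := (Fact.out : p.Prime)
  choose! α hα β hβ hx using h
  let e₁ := e₀ + d.natAbs
  have hneg : ∀ e ≥ e₁, d + (p ^ e : ℕ) * n < 0 := by
    intro e he
    have h1 : e < p ^ e := Nat.lt_pow_self hp.one_lt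
    have h2 : d < (p ^ e : ℕ) := by omega
    nlinarith
  have key : ∀ e ≥ e₁, α e ^ p = a ^ (p - 1) * α (e + 1) ∧ β e ^ p = a ^ (p - 1) * β (e + 1) := by
    intro e he
    have hee : e ≥ e₀ := le_trans (Nat.le_add_right _ _) he
    have h1 : α e ^ p - a ^ (p - 1) * α (e + 1) = β e ^ p - a ^ (p - 1) * β (e + 1) := by
      have h2 := congrArg (· ^ p) (hx e hee)
      simp only [sub_pow_char, mul_pow, ← pow_mul, ← pow_succ] at h2
      have h3 := hx (e + 1) (by omega)
      have h4 : a ^ p = a ^ (p - 1) * a := by rw [← pow_succ, Nat.sub_add_cancel hp.one_le]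
      linear_combination -h2 + a ^ (p - 1) * h3 + x ^ p ^ (e + 1) * h4
    have hdeg : ((p - 1 : ℕ) : ℤ) * d + (d + (p ^ (e + 1) : ℕ) * n) =
        p * (d + (p ^ e : ℕ) * n) := by
      rw [Nat.cast_sub hp.one_le]
      push_cast
      ring
    have h0 : α e ^ p - a ^ (p - 1) * α (e + 1) = 0 := by
      refine eq_zero_of_mem_twist (n := p * (d + (p ^ e : ℕ) * n)) hu hv ht
        (mul_neg_of_pos_of_neg (by exact_mod_cast hp.pos) (hneg e he)) ?_ ?_
      · exact sub_mem (pow_mem_twist (twist_mono u hBu _ (hα e hee)) p)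
          (mul_mem_twist hu (pow_mem_twist hau _) (twist_mono u hBu _ (hα (e + 1) (by omega))) hdeg)
      · rw [h1]
        exact sub_mem (pow_mem_twist (twist_mono v hBv _ (hβ e hee)) p)
          (mul_mem_twist hv (pow_mem_twist hav _) (twist_mono v hBv _ (hβ (e + 1) (by omega))) hdeg)
    exact ⟨sub_eq_zero.mp h0, sub_eq_zero.mp (h1 ▸ h0)⟩
  have iter : ∀ δ : ℕ → Ω, (∀ e ≥ e₁, δ e ^ p = a ^ (p - 1) * δ (e + 1)) →
      ∀ j : ℕ, a * (δ e₁ / a) ^ p ^ j = δ (e₁ + j) := by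
    intro δ hδ j
    induction j with
    | zero => rw [pow_zero, pow_one, add_zero, mul_div_cancel₀ _ ha]
    | succ j ih =>
      have h1 := hδ (e₁ + j) (by omega)
      rw [← ih, mul_pow, ← pow_mul, ← pow_succ] at h1
      have h4 : a ^ p = a ^ (p - 1) * a := by rw [← pow_succ, Nat.sub_add_cancel hp.one_le]
      rw [h4, mul_assoc] at h1
      exact mul_left_cancel₀ (pow_ne_zero _ ha) h1
  have root : ∀ (w t : Ω) (B : Subalgebra K Ω) [IsNoetherianRing B] (δ : ℕ → Ω), w ≠ 0 →
      B ≤ chartRing K t → (∀ e ≥ e₀, δ e ∈ twist w B (d + (p ^ e : ℕ) * n)) →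
      (∀ e ≥ e₁, δ e ^ p = a ^ (p - 1) * δ (e + 1)) →
      ∃ z ∈ twist w (chartRing K t) n, z ^ p ^ e₁ = δ e₁ / a := by
    intro w t B _ δ hw hB hδ hδ'
    have h1 : δ e₁ / a ∈ twist w (chartRing K t) ((p ^ e₁ : ℕ) * n) := by
      refine mem_twist_of_noetherian hp hw hB ha (d := d) fun j => ?_
      rw [iter δ hδ' j]
      convert hδ (e₁ + j) (by omega) using 2
      push_cast
      ring
    obtain ⟨z, hz⟩ := IsAlgClosed.exists_pow_nat_eq (δ e₁ / a) (pow_pos hp.pos e₁)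
    exact ⟨z, mem_twist_of_pow_mem (pow_pos hp.pos e₁) (hz ▸ h1), hz⟩
  obtain ⟨z, hz, hz'⟩ := root u _ Bu α hu hBu hα fun e he => (key e he).1
  obtain ⟨w, hw, hw'⟩ := root v _ Bv β hv hBv hβ fun e he => (key e he).2
  refine ⟨z, hz, -w, neg_mem hw, ?_⟩
  have h1 : (x - (z - w)) ^ p ^ e₁ = 0 := by
    rw [sub_pow_char_pow, sub_pow_char_pow, hz', hw', ← sub_div, ← hx e₁ (by omega)]
    field_simp
    ring
  have := pow_eq_zero_iff (pow_pos hp.pos e₁).ne' |>.mp h1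
  linear_combination this

/-! ### Linear algebra of orthogonal unimodular triples -/

open Matrix in
/-- If `f` is unimodular, the cross product of two vectors orthogonal to `f` is a multiple of `f`. -/
theorem cross_eq_smul_of_dot_eq_zero {A : Type*} [CommRing A] {e f g h : Fin 3 → A}
    (hfg : f ⬝ᵥ g = 0) (hfh : f ⬝ᵥ h = 0) (hef : e ⬝ᵥ f = 1) :
    h ⨯₃ g = (e ⬝ᵥ h ⨯₃ g) • f := by
  simp only [dotProduct, Fin.sum_univ_three] at hfg hfh hef
  ext i
  fin_cases i <;> simp [cross_apply, dotProduct, Fin.sum_univ_three]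
  · linear_combination (-(h 1 * g 2 - h 2 * g 1)) * hef -
      (e 1 * h 2 - e 2 * h 1) * hfg - (e 2 * g 1 - e 1 * g 2) * hfh
  · linear_combination (-(h 2 * g 0 - h 0 * g 2)) * hef -
      (e 2 * h 0 - e 0 * h 2) * hfg - (e 0 * g 2 - e 2 * g 0) * hfh
  · linear_combination (-(h 0 * g 1 - h 1 * g 0)) * hef -
      (e 0 * h 1 - e 1 * h 0) * hfg - (e 1 * g 0 - e 0 * g 1) * hfh

open Matrix in
theorem eq_smul_of_cross_eq_zero {A : Type*} [CommRing A] {e g h : Fin 3 → A}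
    (hhg : h ⨯₃ g = 0) (heg : e ⬝ᵥ g = 1) : h = (e ⬝ᵥ h) • g := by
  have h0 := congrFun hhg 0
  have h1 := congrFun hhg 1
  have h2 := congrFun hhg 2
  simp [cross_apply] at h0 h1 h2
  simp only [dotProduct, Fin.sum_univ_three] at heg
  ext i
  fin_cases i <;> simp [dotProduct, Fin.sum_univ_three]
  · linear_combination (-(h 0)) * heg + e 1 * h2 - e 2 * h1
  · linear_combination (-(h 1)) * heg + e 2 * h0 - e 0 * h2
  · linear_combination (-(h 2)) * heg + e 0 * h1 - e 1 * h0

open Matrix in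
theorem cross_cross_of_dot_eq {A : Type*} [CommRing A] {e f g : Fin 3 → A}
    (hfg : f ⬝ᵥ g = 0) (heg : e ⬝ᵥ g = 1) : (e ⨯₃ f) ⨯₃ g = f := by
  simp only [dotProduct, Fin.sum_univ_three] at hfg heg
  ext i
  fin_cases i <;> simp [cross_apply]
  · linear_combination f 0 * heg - e 0 * hfg
  · linear_combination f 1 * heg - e 1 * hfg
  · linear_combination f 2 * heg - e 2 * hfg

open Matrix in
theorem dot_cross_mem_twist {w : Ω} (hw : w ≠ 0) {B : Subalgebra K Ω} {d : Fin 3 → ℤ} {k M : ℤ}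
    (hd : d 0 + d 1 + d 2 = 2 * k) {e h g : Fin 3 → Ω} (he : ∀ i, e i ∈ twist w B (-d i))
    (hh : ∀ i, h i ∈ twist w B (M - d i)) (hg : ∀ i, g i ∈ twist w B (k - d i)) :
    e ⬝ᵥ h ⨯₃ g ∈ twist w B (M - k) := by
  simp only [cross_apply, dotProduct, Fin.sum_univ_three]
  refine add_mem (add_mem ?_ ?_) ?_
  · exact mul_mem_twist hw (he 0) (sub_mem (mul_mem_twist hw (hh 1) (hg 2) rfl)
      (mul_mem_twist hw (hh 2) (hg 1) (by ring))) (by linarith)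
  · exact mul_mem_twist hw (he 1) (sub_mem (mul_mem_twist hw (hh 2) (hg 0) rfl)
      (mul_mem_twist hw (hh 0) (hg 2) (by ring))) (by linarith)
  · exact mul_mem_twist hw (he 2) (sub_mem (mul_mem_twist hw (hh 0) (hg 1) rfl)
      (mul_mem_twist hw (hh 1) (hg 0) (by ring))) (by linarith)

open Matrix in
theorem dot_mem_twist {w : Ω} (hw : w ≠ 0) {B : Subalgebra K Ω} {d : Fin 3 → ℤ} {k M : ℤ}
    {e h : Fin 3 → Ω} (he : ∀ i, e i ∈ twist w B (d i - k))
    (hh : ∀ i, h i ∈ twist w B (M - d i)) : e ⬝ᵥ h ∈ twist w B (M - k) :=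
  sum_mem fun i _ => mul_mem_twist hw (he i) (hh i) (by ring)

open Matrix in
theorem smul_cross_mem_twist {w : Ω} (hw : w ≠ 0) {B : Subalgebra K Ω} {d : Fin 3 → ℤ} {k m : ℤ}
    (hd : d 0 + d 1 + d 2 = 2 * k) {e f : Fin 3 → Ω} (he : ∀ i, e i ∈ twist w B (d i - k))
    (hf : ∀ i, f i ∈ twist w B (d i)) {l : Ω} (hl : l ∈ twist w B (m - k)) (i : Fin 3) :
    (l • e ⨯₃ f) i ∈ twist w B (m - d i) := by
  have key : ∀ i, (e ⨯₃ f) i ∈ twist w B (k - d i) := by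
    intro i
    fin_cases i <;> simp only [cross_apply]
    · exact sub_mem (mul_mem_twist hw (he 1) (hf 2) (by simp; linarith))
        (mul_mem_twist hw (he 2) (hf 1) (by simp; linarith))
    · exact sub_mem (mul_mem_twist hw (he 2) (hf 0) (by simp; linarith))
        (mul_mem_twist hw (he 0) (hf 2) (by simp; linarith))
    · exact sub_mem (mul_mem_twist hw (he 0) (hf 1) (by simp; linarith))
        (mul_mem_twist hw (he 1) (hf 0) (by simp; linarith))
  exact mul_mem_twist hw hl (key i) (by ring)

open Matrix in
/-- A chart adapted to the triples `f` and `g`: `w` generates `𝒪(1)`, the ring `B` is a finitely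
generated subalgebra of `chartRing K t`, the `f i` and `g i` are sections over `B` of degrees `d i`
and `k - d i`, and `e`, `e'` witness that `f` and `g` generate the unit ideal, homogeneously. -/
structure IsChart (w t : Ω) (B : Subalgebra K Ω) (d : Fin 3 → ℤ) (k : ℤ) (f g e e' : Fin 3 → Ω) :
    Prop where
  ne_zero : w ≠ 0
  le : B ≤ chartRing K t
  fg : B.FG
  f_mem : ∀ i, f i ∈ twist w B (d i)
  g_mem : ∀ i, g i ∈ twist w B (k - d i)
  e_mem : ∀ i, e i ∈ twist w B (-d i)
  e'_mem : ∀ i, e' i ∈ twist w B (d i - k)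
  e_dot : e ⬝ᵥ f = 1
  e'_dot : e' ⬝ᵥ g = 1

theorem IsChart.mono {w t : Ω} {B B' : Subalgebra K Ω} {d : Fin 3 → ℤ} {k : ℤ}
    {f g e e' : Fin 3 → Ω} (h : IsChart w t B d k f g e e') (hBB' : B ≤ B')
    (hle : B' ≤ chartRing K t) (hfg : B'.FG) : IsChart w t B' d k f g e e' :=
  ⟨h.1, hle, hfg, fun i => twist_mono _ hBB' _ (h.4 i), fun i => twist_mono _ hBB' _ (h.5 i),
    fun i => twist_mono _ hBB' _ (h.6 i), fun i => twist_mono _ hBB' _ (h.7 i), h.8, h.9⟩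

theorem dot_pow_char {p : ℕ} [Fact p.Prime] [CharP Ω p] (n : ℕ) (a b : Fin 3 → Ω) :
    (a ^ p ^ n) ⬝ᵥ (b ^ p ^ n) = (a ⬝ᵥ b) ^ p ^ n := by
  simp only [dotProduct, Pi.pow_apply, ← mul_pow]
  rw [sum_pow_char_pow]

open Matrix in
/-- Given a local solution `s` of `f ⬝ᵥ s = r` and a tight closure relation
`a r ^ q = f ^ q ⬝ᵥ c`, the vector `a s ^ q - c` is a syzygy of `f ^ q`; its image in the quotient
line bundle of the syzygy bundle, and its coordinate along `g ^ q`, are sections of the expected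
degree on the chart. -/
theorem IsChart.tight_cross {p : ℕ} [Fact p.Prime] [CharP Ω p] {w t : Ω} {B : Subalgebra K Ω}
    {d : Fin 3 → ℤ} {k m D : ℤ} {f g e e' : Fin 3 → Ω} (h : IsChart w t B d k f g e e')
    (hd : d 0 + d 1 + d 2 = 2 * k) (hfg : f ⬝ᵥ g = 0)
    {a r : Ω} {s c : Fin 3 → Ω} {n : ℕ} (hrs : f ⬝ᵥ s = r)
    (hs : ∀ i, s i ∈ twist w B (m - d i))
    (ha : a ∈ twist w B D) (hc : ∀ i, c i ∈ twist w B (D + (p ^ n : ℕ) * (m - d i)))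
    (hac : a * r ^ p ^ n = (f ^ p ^ n) ⬝ᵥ c) :
    (a • s ^ p ^ n - c) ⨯₃ (g ^ p ^ n) =
        ((e ^ p ^ n) ⬝ᵥ (a • s ^ p ^ n - c) ⨯₃ (g ^ p ^ n)) • f ^ p ^ n ∧
      (e ^ p ^ n) ⬝ᵥ (a • s ^ p ^ n - c) ⨯₃ (g ^ p ^ n) ∈ twist w B (D + (p ^ n : ℕ) * (m - k)) ∧
      (e' ^ p ^ n) ⬝ᵥ (a • s ^ p ^ n - c) ∈ twist w B (D + (p ^ n : ℕ) * (m - k)) := by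
  have hmem : ∀ i, (a • s ^ p ^ n - c) i ∈ twist w B (D + (p ^ n : ℕ) * m - (p ^ n : ℕ) * d i) := by
    intro i
    have : D + ((p ^ n : ℕ) : ℤ) * m - (p ^ n : ℕ) * d i = D + (p ^ n : ℕ) * (m - d i) := by ring
    rw [this]
    exact sub_mem (mul_mem_twist h.ne_zero ha (pow_mem_twist (hs i) _) rfl) (hc i)
  have hdeg : D + ((p ^ n : ℕ) : ℤ) * (m - k) = D + (p ^ n : ℕ) * m - (p ^ n : ℕ) * k := by ring
  refine ⟨cross_eq_smul_of_dot_eq_zero ?_ ?_ ?_, ?_, ?_⟩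
  · rw [dot_pow_char, hfg, zero_pow (pow_pos (Fact.out : p.Prime).pos n).ne']
  · rw [dotProduct_sub, dotProduct_smul, dot_pow_char, hrs, smul_eq_mul, hac, sub_self]
  · rw [dot_pow_char, h.e_dot, one_pow]
  · rw [hdeg]
    refine dot_cross_mem_twist (d := fun i => (p ^ n : ℕ) * d i) h.ne_zero ?_ (fun i => ?_) hmem
      (fun i => ?_)
    · linear_combination ((p ^ n : ℕ) : ℤ) * hd
    · rw [← mul_neg]
      exact pow_mem_twist (h.e_mem i) _
    · rw [← mul_sub]
      exact pow_mem_twist (h.g_mem i) _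
  · rw [hdeg]
    refine dot_mem_twist (d := fun i => (p ^ n : ℕ) * d i) h.ne_zero (fun i => ?_) hmem
    rw [← mul_sub]
    exact pow_mem_twist (h.e'_mem i) _

/-! ### Gluing local solutions -/

open Matrix in
theorem cross_pow_char {p : ℕ} [Fact p.Prime] [CharP Ω p] (n : ℕ) (a b : Fin 3 → Ω) :
    (a ^ p ^ n) ⨯₃ (b ^ p ^ n) = (a ⨯₃ b) ^ p ^ n := by
  ext i
  fin_cases i <;> simp [cross_apply, sub_pow_char_pow, mul_pow]

theorem sub_pow_char_pi {p : ℕ} [Fact p.Prime] [CharP Ω p] (n : ℕ) (a b : Fin 3 → Ω) :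
    (a - b) ^ p ^ n = a ^ p ^ n - b ^ p ^ n := by
  ext i
  simp [sub_pow_char_pow]

theorem fg_sup_adjoin {B : Subalgebra K Ω} (h : B.FG) (x : Ω) :
    (B ⊔ Algebra.adjoin K {x}).FG :=
  h.sup (Subalgebra.fg_def.mpr ⟨{x}, Set.finite_singleton x, rfl⟩)

/-- A homogeneous tight closure relation: `r`, of degree `m`, satisfies
`a r ^ pᵉ = ∑ cᵢ fᵢ ^ pᵉ` for all large `e`, with a fixed nonzero `a` of degree `D`, where `a` and the
`cᵢ` (which depend on `e`) are global sections, of the degrees that homogeneity prescribes. -/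
def TightDatum (p : ℕ) (u v : Ω) (Bu Bv : Subalgebra K Ω) (d : Fin 3 → ℤ) (m : ℤ)
    (f : Fin 3 → Ω) (r : Ω) : Prop :=
  ∃ (a : Ω) (D : ℤ) (e₀ : ℕ), a ≠ 0 ∧ a ∈ twist u Bu D ∧ a ∈ twist v Bv D ∧
    ∀ e ≥ e₀, ∃ c : Fin 3 → Ω, (∀ i, c i ∈ twist u Bu (D + (p ^ e : ℕ) * (m - d i))) ∧
      (∀ i, c i ∈ twist v Bv (D + (p ^ e : ℕ) * (m - d i))) ∧
      a * r ^ p ^ e = (f ^ p ^ e) ⬝ᵥ c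

open Matrix in
/-- A homogeneous `r` of degree `m` which satisfies a tight closure relation, or has degree at
least `k`, can be written as `∑ fᵢ wᵢ` with global sections `wᵢ` on the absolute integral closure:
the local solutions `r e` on the two charts are corrected first in the quotient and then in the
sub line bundle of the syzygy bundle. -/
theorem exists_glued_solution [IsAlgClosed K] (p : ℕ) [Fact p.Prime] [CharP Ω p] [IsAlgClosed Ω]
    {u v : Ω} (ht : v / u ∉ Set.range (algebraMap K Ω)) {Bu Bv : Subalgebra K Ω}
    {d : Fin 3 → ℤ} {k m : ℤ} {f g eu eu' ev ev' : Fin 3 → Ω}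
    (hu : IsChart u (v / u) Bu d k f g eu eu') (hv : IsChart v (u / v) Bv d k f g ev ev')
    (hd : d 0 + d 1 + d 2 = 2 * k) (hfg : f ⬝ᵥ g = 0) {r : Ω}
    (hru : r ∈ twist u Bu m) (hrv : r ∈ twist v Bv m)
    (hr : k ≤ m ∨ TightDatum p u v Bu Bv d m f r) :
    ∃ w : Fin 3 → Ω, f ⬝ᵥ w = r ∧ ∀ i, w i ∈ twist u (chartRing K (v / u)) (m - d i) ∧
      w i ∈ twist v (chartRing K (u / v)) (m - d i) := by
  have hp := (Fact.out : p.Prime)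
  have hu0 := hu.ne_zero
  have hv0 := hv.ne_zero
  have toU : ∀ n, twist v (chartRing K (u / v)) n ≤ twist u (overlapRing K (v / u)) n :=
    twist_le_overlap hu0 hv0
  have toU' : ∀ n, twist u (chartRing K (v / u)) n ≤ twist u (overlapRing K (v / u)) n :=
    twist_mono u (chartRing_le_overlapRing _)
  -- the two local solutions and the first obstruction class
  set s := r • eu with hs
  set t := r • ev with ht'
  have hsm : ∀ i, s i ∈ twist u Bu (m - d i) := fun i =>
    mul_mem_twist hu0 hru (hu.e_mem i) (by ring)
  have htm : ∀ i, t i ∈ twist v Bv (m - d i) := fun i =>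
    mul_mem_twist hv0 hrv (hv.e_mem i) (by ring)
  have hfs : f ⬝ᵥ s = r := by rw [hs, dotProduct_smul, dotProduct_comm, hu.e_dot, smul_eq_mul, mul_one]
  have hft : f ⬝ᵥ t = r := by rw [ht', dotProduct_smul, dotProduct_comm, hv.e_dot, smul_eq_mul, mul_one]
  set l := eu ⬝ᵥ (s - t) ⨯₃ g with hl
  have hlf : (s - t) ⨯₃ g = l • f :=
    cross_eq_smul_of_dot_eq_zero hfg (by rw [dotProduct_sub, hfs, hft, sub_self]) hu.e_dot
  have hlm : l ∈ twist u (overlapRing K (v / u)) (m - k) := by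
    have hle := hu.le.trans (chartRing_le_overlapRing _)
    refine dot_cross_mem_twist hu0 hd (fun i => twist_mono u hle _ (hu.e_mem i)) (fun i => ?_)
      (fun i => twist_mono u hle _ (hu.g_mem i))
    exact sub_mem (twist_mono u hle _ (hsm i)) (toU _ (twist_mono v hv.le _ (htm i)))
  have cancel : ∀ (e : Fin 3 → Ω) (h : Fin 3 → Ω) (n : ℕ) (α β : Ω), e ⬝ᵥ h = 1 →
      α • h ^ p ^ n = β • h ^ p ^ n → α = β := by
    intro e h n α β heh hαβ
    have h1 := congrArg (fun z => (e ^ p ^ n) ⬝ᵥ z) hαβ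
    simpa only [dotProduct_smul, dot_pow_char, heh, one_pow, smul_eq_mul, mul_one] using h1
  have noeth : ∀ {B : Subalgebra K Ω}, B.FG → IsNoetherianRing B := fun h => by
    have := (Subalgebra.fg_iff_finiteType _).mp h
    exact Algebra.FiniteType.isNoetherianRing K _
  obtain ⟨lu, hlu, lv, hlv, hl'⟩ : ∃ α ∈ twist u (chartRing K (v / u)) (m - k),
      ∃ β ∈ twist v (chartRing K (u / v)) (m - k), l = α + β := by
    by_cases hkm : k ≤ m
    · exact exists_twist_add p hu0 hv0 (by omega) hlm
    · obtain ⟨a, D, e₀, ha, hau, hav, hc⟩ := hr.resolve_left hkm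
      have := noeth hu.fg
      have := noeth hv.fg
      refine exists_twist_add_of_tight p hu0 hv0 ht hu.le hv.le (by omega) ha
        (twist_mono u hu.le _ hau) (twist_mono v hv.le _ hav) e₀ fun e he => ?_
      obtain ⟨c, hcu, hcv, hac⟩ := hc e he
      obtain ⟨h1, h2, -⟩ := hu.tight_cross hd hfg hfs hsm hau hcu hac
      obtain ⟨h3, h4, -⟩ := hv.tight_cross hd hfg hft htm hav hcv hac
      refine ⟨_, h2, _, h4, cancel eu f e _ _ hu.e_dot ?_⟩
      rw [sub_smul, ← h1, ← h3, ← LinearMap.sub_apply, ← map_sub, sub_sub_sub_cancel_right,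
        ← smul_sub, ← sub_pow_char_pi, map_smul, LinearMap.smul_apply, cross_pow_char, hlf,
        smul_pow, smul_smul]
  -- correct the local solutions so that their difference is a multiple of `g`
  set s' := s - lu • eu' ⨯₃ f with hs'
  set t' := t + lv • ev' ⨯₃ f with ht''
  have hfs' : f ⬝ᵥ s' = r := by
    rw [hs', dotProduct_sub, hfs, dotProduct_smul, dot_cross_self, smul_zero, sub_zero]
  have hft' : f ⬝ᵥ t' = r := by
    rw [ht'', dotProduct_add, hft, dotProduct_smul, dot_cross_self, smul_zero, add_zero]
  have hst' : (s' - t') ⨯₃ g = 0 := by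
    have h1 : s' - t' = (s - t) - lu • eu' ⨯₃ f - lv • ev' ⨯₃ f := by rw [hs', ht'']; abel
    rw [h1, map_sub, map_sub, map_smul, map_smul, LinearMap.sub_apply, LinearMap.sub_apply,
      LinearMap.smul_apply, LinearMap.smul_apply, cross_cross_of_dot_eq hfg hu.e'_dot,
      cross_cross_of_dot_eq hfg hv.e'_dot, hlf, hl', add_smul]
    abel
  -- the rings `Bu` and `Bv` are enlarged below so that they contain the corrections
  set μ := eu' ⬝ᵥ (s' - t') with hμ
  have hμg : s' - t' = μ • g := eq_smul_of_cross_eq_zero hst' hu.e'_dot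
  set Bu' := Bu ⊔ Algebra.adjoin K {lu * u ^ (-(m - k))} with hBu'
  set Bv' := Bv ⊔ Algebra.adjoin K {lv * v ^ (-(m - k))} with hBv'
  have hu' : IsChart u (v / u) Bu' d k f g eu eu' := hu.mono le_sup_left
    (sup_le hu.le (Algebra.adjoin_le (Set.singleton_subset_iff.mpr hlu))) (fg_sup_adjoin hu.fg _)
  have hv' : IsChart v (u / v) Bv' d k f g ev ev' := hv.mono le_sup_left
    (sup_le hv.le (Algebra.adjoin_le (Set.singleton_subset_iff.mpr hlv))) (fg_sup_adjoin hv.fg _)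
  have hluB : lu ∈ twist u Bu' (m - k) :=
    mem_twist.mpr ((le_sup_right : _ ≤ Bu') (Algebra.self_mem_adjoin_singleton K _))
  have hlvB : lv ∈ twist v Bv' (m - k) :=
    mem_twist.mpr ((le_sup_right : _ ≤ Bv') (Algebra.self_mem_adjoin_singleton K _))
  have hsm' : ∀ i, s' i ∈ twist u Bu' (m - d i) := fun i =>
    sub_mem (twist_mono u le_sup_left _ (hsm i))
      (smul_cross_mem_twist hu0 hd hu'.e'_mem hu'.f_mem hluB i)
  have htm' : ∀ i, t' i ∈ twist v Bv' (m - d i) := fun i =>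
    add_mem (twist_mono v le_sup_left _ (htm i))
      (smul_cross_mem_twist hv0 hd hv'.e'_mem hv'.f_mem hlvB i)
  have hμm : μ ∈ twist u (overlapRing K (v / u)) (m - k) := by
    refine dot_mem_twist (d := d) hu0 (fun i => toU' _ (twist_mono u hu.le _ (hu.e'_mem i)))
      (fun i => ?_)
    exact sub_mem (toU' _ (twist_mono u hu'.le _ (hsm' i)))
      (toU _ (twist_mono v hv'.le _ (htm' i)))
  obtain ⟨μu, hμu, μv, hμv, hμ'⟩ : ∃ α ∈ twist u (chartRing K (v / u)) (m - k),
      ∃ β ∈ twist v (chartRing K (u / v)) (m - k), μ = α + β := by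
    by_cases hkm : k ≤ m
    · exact exists_twist_add p hu0 hv0 (by omega) hμm
    · obtain ⟨a, D, e₀, ha, hau, hav, hc⟩ := hr.resolve_left hkm
      have := noeth hu'.fg
      have := noeth hv'.fg
      refine exists_twist_add_of_tight p hu0 hv0 ht hu'.le hv'.le (by omega) ha
        (twist_mono u hu.le _ hau) (twist_mono v hv.le _ hav) (e₀ + D.natAbs) fun e he => ?_
      obtain ⟨c, hcu, hcv, hac⟩ := hc e (by omega)
      obtain ⟨h1, h2, h2'⟩ := hu'.tight_cross hd hfg hfs' hsm' (twist_mono u le_sup_left _ hau)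
        (fun i => twist_mono u le_sup_left _ (hcu i)) hac
      obtain ⟨h3, h4, h4'⟩ := hv'.tight_cross hd hfg hft' htm' (twist_mono v le_sup_left _ hav)
        (fun i => twist_mono v le_sup_left _ (hcv i)) hac
      have h5 : (a • s' ^ p ^ e - c) ⨯₃ (g ^ p ^ e) = (a • t' ^ p ^ e - c) ⨯₃ (g ^ p ^ e) := by
        rw [← sub_eq_zero, ← LinearMap.sub_apply, ← map_sub, sub_sub_sub_cancel_right,
          ← smul_sub, ← sub_pow_char_pi, map_smul, LinearMap.smul_apply, cross_pow_char, hst',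
          zero_pow (pow_pos hp.pos e).ne', smul_zero]
      have h6 := cancel eu f e _ _ hu.e_dot (h1.symm.trans (h5.trans h3))
      -- a section of negative degree vanishes
      have h7 := eq_zero_of_mem_twist hu0 hv0 ht (n := D + (p ^ e : ℕ) * (m - k)) (by
        have h1 : e < p ^ e := Nat.lt_pow_self hp.one_lt
        have h2 : D < (p ^ e : ℕ) := by omega
        have : m - k ≤ -1 := by omega
        nlinarith) (twist_mono u hu'.le _ h2) (h6 ▸ twist_mono v hv'.le _ h4)
      rw [h7, zero_smul] at h1
      have h8 : (eu' ^ p ^ e) ⬝ᵥ (g ^ p ^ e) = 1 := by rw [dot_pow_char, hu.e'_dot, one_pow]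
      have h9 : (ev' ^ p ^ e) ⬝ᵥ (g ^ p ^ e) = 1 := by rw [dot_pow_char, hv.e'_dot, one_pow]
      refine ⟨_, h2', _, h4', cancel eu' g e _ _ hu.e'_dot ?_⟩
      rw [sub_smul, ← eq_smul_of_cross_eq_zero h1 h8,
        ← eq_smul_of_cross_eq_zero (h5.symm.trans h1) h9, sub_sub_sub_cancel_right,
        ← smul_sub, ← sub_pow_char_pi, hμg, smul_pow, smul_smul]
  have hw : s' - μu • g = t' + μv • g := by
    rw [hμ', add_smul] at hμg
    rw [sub_eq_iff_eq_add, ← sub_eq_iff_eq_add']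
    rw [← sub_eq_zero] at hμg ⊢
    rw [← hμg]; abel
  refine ⟨s' - μu • g, ?_, fun i => ⟨?_, ?_⟩⟩
  · rw [dotProduct_sub, dotProduct_smul, hfg, smul_zero, sub_zero, hfs']
  · exact sub_mem (twist_mono u hu'.le _ (hsm' i))
      (mul_mem_twist hu0 hμu (twist_mono u hu.le _ (hu.g_mem i)) (by ring))
  · rw [hw]
    exact add_mem (twist_mono v hv'.le _ (htm' i))
      (mul_mem_twist hv0 hμv (twist_mono v hv.le _ (hv.g_mem i)) (by ring))

/-- A global section is integral over the homogeneous coordinate ring: it lies in every valuation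
ring that contains `K`, `u` and `v`. -/
theorem mem_valuationSubring_of_mem_twist [IsAlgClosed K] {u v : Ω} (hu : u ≠ 0) (hv : v ≠ 0)
    (ht : v / u ∉ Set.range (algebraMap K Ω)) {n : ℤ} {x : Ω}
    (h1 : x ∈ twist u (chartRing K (v / u)) n) (h2 : x ∈ twist v (chartRing K (u / v)) n)
    (V : ValuationSubring Ω) (hV : ∀ c : K, algebraMap K Ω c ∈ V) (huV : u ∈ V) (hvV : v ∈ V) :
    x ∈ V := by
  by_cases hn : n < 0
  · rw [eq_zero_of_mem_twist hu hv ht hn h1 h2]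
    exact zero_mem _
  have key : ∀ {w t : Ω}, w ≠ 0 → w ∈ V → t ∈ V → x ∈ twist w (chartRing K t) n → x ∈ V := by
    intro w t hw hwV htV h
    lift n to ℕ using not_lt.mp hn
    have h3 := mul_mem (mem_chartRing_iff.mp h V hV htV) (pow_mem hwV n)
    rwa [zpow_neg, zpow_natCast, inv_mul_cancel_right₀ (pow_ne_zero n hw)] at h3
  rcases V.mem_or_inv_mem (v / u) with h | h
  · exact key hu huV h h1
  · rw [inv_div] at h
    exact key hv hvV h h2

end Charts

/-! ### Orthogonal triples on the punctured affine three-space -/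

section Laurent

variable (K : Type*) [Field K]

/-- Laurent polynomials in three variables in which only the variables in `J` are inverted: the
ring of functions on the locus of affine three-space where these variables do not vanish. -/
def laurentPart (J : Finset (Fin 3)) : Subalgebra K (AddMonoidAlgebra K (Fin 3 → ℤ)) where
  carrier := {x | ∀ α, x.coeff α ≠ 0 → ∀ i ∉ J, 0 ≤ α i}
  mul_mem' := by
    classical
    intro a b ha hb α hα i hi
    have h1 := AddMonoidAlgebra.support_coeff_mul_subset a b (Finsupp.mem_support_iff.mpr hα)
    obtain ⟨β, hβ, γ, hγ, rfl⟩ := Finset.mem_add.mp h1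
    exact add_nonneg (ha β (Finsupp.mem_support_iff.mp hβ) i hi)
      (hb γ (Finsupp.mem_support_iff.mp hγ) i hi)
  add_mem' := by
    intro a b ha hb α hα i hi
    by_cases h : a.coeff α = 0
    · refine hb α (fun h' => hα ?_) i hi
      rw [AddMonoidAlgebra.coeff_add, Finsupp.add_apply, h, h', add_zero]
    · exact ha α h i hi
  algebraMap_mem' := by
    intro r α hα i hi
    simp only [AddMonoidAlgebra.coe_algebraMap, Function.comp_apply,
      AddMonoidAlgebra.coeff_single, Finsupp.single_apply] at hα
    by_cases h : 0 = α
    · rw [← h]; rfl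
    · exact absurd (if_neg h) hα

variable {K}

theorem coeff_eq_zero_of_mem_laurentPart {J : Finset (Fin 3)}
    {x : AddMonoidAlgebra K (Fin 3 → ℤ)} (hx : x ∈ laurentPart K J) {α : Fin 3 → ℤ} {i : Fin 3}
    (hi : i ∉ J) (hα : α i < 0) : x.coeff α = 0 := by
  by_contra h
  exact absurd (hx α h i hi) (not_le.mpr hα)

theorem mem_laurentPart_of_coeff {J : Finset (Fin 3)}
    {x : AddMonoidAlgebra K (Fin 3 → ℤ)}
    (hx : ∀ α : Fin 3 → ℤ, ∀ i ∉ J, α i < 0 → x.coeff α = 0) : x ∈ laurentPart K J := by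
  intro α hα i hi
  by_contra h
  exact hα (hx α i hi (not_le.mp h))

theorem laurentPart_mono {I J : Finset (Fin 3)} (h : I ⊆ J) :
    laurentPart K I ≤ laurentPart K J :=
  fun _ hx α hα i hi => hx α hα i fun hiI => hi (h hiI)

/-- The first cohomology of the structure sheaf of the punctured affine three-space vanishes:
a Čech cocycle `(a, b, a + b)` is a coboundary. -/
theorem exists_laurent_cochain {a b : AddMonoidAlgebra K (Fin 3 → ℤ)}
    (ha : a ∈ laurentPart K {0, 1}) (hb : b ∈ laurentPart K {1, 2})
    (hab : a + b ∈ laurentPart K {0, 2}) :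
    ∃ c ∈ laurentPart K {0}, c - a ∈ laurentPart K {1} ∧ c - (a + b) ∈ laurentPart K {2} := by
  classical
  let c : AddMonoidAlgebra K (Fin 3 → ℤ) := .ofCoeff (a.coeff.filter fun α => α 0 < 0)
  have hc : ∀ α, c.coeff α = if α 0 < 0 then a.coeff α else 0 := fun α => Finsupp.filter_apply _ _ _
  have hadd : ∀ α, (a + b).coeff α = a.coeff α + b.coeff α := fun α => rfl
  have hsub : ∀ (x y : AddMonoidAlgebra K (Fin 3 → ℤ)) α,
      (x - y).coeff α = x.coeff α - y.coeff α := fun x y α => rfl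
  refine ⟨c, mem_laurentPart_of_coeff ?_, mem_laurentPart_of_coeff ?_,
    mem_laurentPart_of_coeff ?_⟩
  · intro α i hi hα
    rw [hc]
    split_ifs with h0
    · fin_cases i
      · simp at hi
      · have h1 := coeff_eq_zero_of_mem_laurentPart hab (i := 1) (by decide) hα
        have h2 := coeff_eq_zero_of_mem_laurentPart hb (i := 0) (by decide) h0
        rwa [hadd, h2, add_zero] at h1
      · exact coeff_eq_zero_of_mem_laurentPart ha (i := 2) (by decide) hα
    · rfl
  · intro α i hi hα
    rw [hsub, hc]
    split_ifs with h0
    · rw [sub_self]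
    · rw [zero_sub, neg_eq_zero]
      fin_cases i
      · exact absurd hα h0
      · simp at hi
      · exact coeff_eq_zero_of_mem_laurentPart ha (i := 2) (by decide) hα
  · intro α i hi hα
    rw [hsub, hc]
    split_ifs with h0
    · rw [hadd, coeff_eq_zero_of_mem_laurentPart hb (i := 0) (by decide) h0, add_zero, sub_self]
    · rw [zero_sub, neg_eq_zero]
      fin_cases i
      · exact absurd hα h0
      · exact coeff_eq_zero_of_mem_laurentPart hab (i := 1) (by decide) hα
      · simp at hi

open Matrix in
theorem dot_mem_subalgebra {A : Type*} [CommRing A] [Algebra K A] {B : Subalgebra K A}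
    {a b : Fin 3 → A} (ha : ∀ i, a i ∈ B) (hb : ∀ i, b i ∈ B) : a ⬝ᵥ b ∈ B :=
  sum_mem fun i _ => mul_mem (ha i) (hb i)

open Matrix in
theorem cross_mem_subalgebra {A : Type*} [CommRing A] [Algebra K A] {B : Subalgebra K A}
    {a b : Fin 3 → A} (ha : ∀ i, a i ∈ B) (hb : ∀ i, b i ∈ B) (i : Fin 3) :
    (a ⨯₃ b) i ∈ B := by
  fin_cases i <;> simp only [cross_apply] <;>
    exact sub_mem (mul_mem (ha _) (hb _)) (mul_mem (ha _) (hb _))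

open Matrix in
/-- If orthogonal triples `f`, `g` of polynomials are unimodular on each of the three standard
opens of the punctured affine three-space, then `f` is unimodular: the local solutions `e j` of
`f ⬝ᵥ w = 1` are corrected in the quotient and then in the sub line bundle of the syzygy bundle. -/
theorem exists_dot_eq_one {f g : Fin 3 → AddMonoidAlgebra K (Fin 3 → ℤ)}
    (hf : ∀ i, f i ∈ laurentPart K ∅) (hg : ∀ i, g i ∈ laurentPart K ∅) (hfg : f ⬝ᵥ g = 0)
    {e e' : Fin 3 → Fin 3 → AddMonoidAlgebra K (Fin 3 → ℤ)}
    (he : ∀ j i, e j i ∈ laurentPart K {j}) (he' : ∀ j i, e' j i ∈ laurentPart K {j})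
    (hef : ∀ j, e j ⬝ᵥ f = 1) (heg : ∀ j, e' j ⬝ᵥ g = 1) :
    ∃ w : Fin 3 → AddMonoidAlgebra K (Fin 3 → ℤ), (∀ i, w i ∈ laurentPart K ∅) ∧ f ⬝ᵥ w = 1 := by
  have up : ∀ {J J' : Finset (Fin 3)} {x}, J ⊆ J' → x ∈ laurentPart K J → x ∈ laurentPart K J' :=
    fun h hx => laurentPart_mono h hx
  have hfe : ∀ j, f ⬝ᵥ e j = 1 := fun j => by rw [dotProduct_comm, hef]
  -- `l i j` measures the difference of two local solutions modulo multiples of `g`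
  have hl : ∀ i j, ∃ l ∈ laurentPart K {i, j}, (e i - e j) ⨯₃ g = l • f := by
    intro i j
    have hm : ∀ t, e i t ∈ laurentPart K {i, j} := fun t => up (by simp) (he i t)
    refine ⟨_, ?_, cross_eq_smul_of_dot_eq_zero hfg
      (by rw [dotProduct_sub, hfe, hfe, sub_self]) (hef i)⟩
    exact dot_mem_subalgebra hm (cross_mem_subalgebra
      (fun t => sub_mem (hm t) (up (by simp) (he j t))) fun t => up (by simp) (hg t))
  obtain ⟨a, ha, haf⟩ := hl 0 1
  obtain ⟨b, hb, hbf⟩ := hl 1 2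
  obtain ⟨l, hl, hlf⟩ := hl 0 2
  have cancel : ∀ (x y : AddMonoidAlgebra K (Fin 3 → ℤ)) (e h : Fin 3 → AddMonoidAlgebra K (Fin 3 → ℤ)), e ⬝ᵥ h = 1 →
      x • h = y • h → x = y := by
    intro x y e h heh hxy
    have h1 := congrArg (fun z => e ⬝ᵥ z) hxy
    simpa only [dotProduct_smul, heh, smul_eq_mul, mul_one] using h1
  have hab : l = a + b := by
    refine cancel _ _ _ f (hef 0) ?_
    rw [add_smul, ← haf, ← hbf, ← hlf, ← LinearMap.add_apply, ← map_add, sub_add_sub_cancel]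
  rw [hab] at hl hlf
  obtain ⟨c, hc0, hc1, hc2⟩ := exists_laurent_cochain ha hb hl
  set s : Fin 3 → Fin 3 → AddMonoidAlgebra K (Fin 3 → ℤ) :=
    ![e 0 - c • e' 0 ⨯₃ f, e 1 - (c - a) • e' 1 ⨯₃ f, e 2 - (c - (a + b)) • e' 2 ⨯₃ f] with hs
  have hsm : ∀ j i, s j i ∈ laurentPart K {j} := by
    have key : ∀ (j : Fin 3) (x), x ∈ laurentPart K {j} → ∀ i,
        (e j - x • e' j ⨯₃ f) i ∈ laurentPart K {j} := fun j x hx i =>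
      sub_mem (he j i) (mul_mem hx (cross_mem_subalgebra (he' j) (fun t => up (by simp) (hf t)) i))
    intro j
    fin_cases j
    · exact key 0 c hc0
    · exact key 1 _ hc1
    · exact key 2 _ hc2
  have hfs : ∀ j, f ⬝ᵥ s j = 1 := by
    have key : ∀ (j : Fin 3) (x : AddMonoidAlgebra K (Fin 3 → ℤ)),
        f ⬝ᵥ (e j - x • e' j ⨯₃ f) = 1 := fun j x => by
      rw [dotProduct_sub, hfe, dotProduct_smul, dot_cross_self, smul_zero, sub_zero]
    intro j
    fin_cases j
    · exact key 0 c
    · exact key 1 _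
    · exact key 2 _
  have hsg : ∀ j, (s j - s 0) ⨯₃ g = 0 := by
    have key : ∀ (i j : Fin 3) (x y : AddMonoidAlgebra K (Fin 3 → ℤ)),
        (e i - e j) ⨯₃ g = (x - y) • f →
        ((e j - y • e' j ⨯₃ f) - (e i - x • e' i ⨯₃ f)) ⨯₃ g = 0 := fun i j x y h => by
      have h1 : (e j - y • e' j ⨯₃ f) - (e i - x • e' i ⨯₃ f) =
        x • e' i ⨯₃ f - y • e' j ⨯₃ f - (e i - e j) := by abel
      rw [h1, map_sub, map_sub, map_smul, map_smul, LinearMap.sub_apply, LinearMap.sub_apply,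
        LinearMap.smul_apply, LinearMap.smul_apply, cross_cross_of_dot_eq hfg (heg i),
        cross_cross_of_dot_eq hfg (heg j), h, sub_smul, sub_self]
    intro j
    fin_cases j
    · simp
    · exact key 0 1 c (c - a) (by rw [haf, sub_sub_cancel])
    · exact key 0 2 c (c - (a + b)) (by rw [hlf, sub_sub_cancel])
  have hsg' : ∀ i j, (s i - s j) ⨯₃ g = 0 := fun i j => by
    rw [← sub_sub_sub_cancel_right (s i) (s j) (s 0), map_sub, LinearMap.sub_apply, hsg, hsg,
      sub_self]
  have hm : ∀ i j, ∃ l ∈ laurentPart K {i, j}, s i - s j = l • g := fun i j =>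
    ⟨_, dot_mem_subalgebra (fun t => up (by simp) (he' i t)) fun t =>
      sub_mem (up (by simp) (hsm i t)) (up (by simp) (hsm j t)),
      eq_smul_of_cross_eq_zero (hsg' i j) (heg i)⟩
  obtain ⟨a', ha', hag⟩ := hm 0 1
  obtain ⟨b', hb', hbg⟩ := hm 1 2
  obtain ⟨l', hl', hlg⟩ := hm 0 2
  have hab' : l' = a' + b' := by
    refine cancel _ _ _ g (heg 0) ?_
    rw [add_smul, ← hag, ← hbg, ← hlg, sub_add_sub_cancel]
  rw [hab'] at hl'
  obtain ⟨c', hc0', hc1', -⟩ := exists_laurent_cochain ha' hb' hl'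
  have heq : s 0 - c' • g = s 1 - (c' - a') • g := by
    rw [sub_smul, ← hag]; abel
  refine ⟨s 0 - c' • g, fun i => ?_, ?_⟩
  · have h0 : (s 0 - c' • g) i ∈ laurentPart K {0} :=
      sub_mem (hsm 0 i) (mul_mem hc0' (up (by simp) (hg i)))
    have h1 : (s 0 - c' • g) i ∈ laurentPart K {1} := by
      rw [heq]
      exact sub_mem (hsm 1 i) (mul_mem hc1' (up (by simp) (hg i)))
    refine mem_laurentPart_of_coeff fun α j _ hα => ?_
    by_cases hj : j = 0
    · exact coeff_eq_zero_of_mem_laurentPart h1 (i := j) (by simp [hj]) hα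
    · exact coeff_eq_zero_of_mem_laurentPart h0 (i := j) (by simp [hj]) hα
  · rw [dotProduct_sub, hfs, dotProduct_smul, hfg, smul_zero, sub_zero]

/-- The inclusion of polynomials into Laurent polynomials. -/
noncomputable def toLaurent : MvPolynomial (Fin 3) K →ₐ[K] AddMonoidAlgebra K (Fin 3 → ℤ) :=
  MvPolynomial.aeval fun i => AddMonoidAlgebra.single (Pi.single i 1) 1

theorem single_mem_laurentPart {J : Finset (Fin 3)} {α : Fin 3 → ℤ} (h : ∀ i ∉ J, 0 ≤ α i) (r : K) :
    AddMonoidAlgebra.single α r ∈ laurentPart K J := by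
  intro β hβ i hi
  simp only [AddMonoidAlgebra.coeff_single, Finsupp.single_apply] at hβ
  by_cases h' : α = β
  · exact h' ▸ h i hi
  · exact absurd (if_neg h') hβ

theorem toLaurent_mem (h : MvPolynomial (Fin 3) K) : toLaurent h ∈ laurentPart K ∅ := by
  induction h using MvPolynomial.induction_on with
  | C a =>
    rw [toLaurent, MvPolynomial.aeval_C]
    exact Subalgebra.algebraMap_mem _ a
  | add p q hp hq => rw [map_add]; exact add_mem hp hq
  | mul_X p i hp =>
    rw [map_mul]
    refine mul_mem hp ?_
    rw [toLaurent, MvPolynomial.aeval_X]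
    refine single_mem_laurentPart (fun j _ => ?_) 1
    by_cases h : j = i
    · subst h; simp
    · simp [Pi.single_eq_of_ne h]

theorem exists_laurent_inverse {f : Fin 3 → MvPolynomial (Fin 3) K}
    (hf : (Ideal.span (Set.range f)).radical = Ideal.span (Set.range MvPolynomial.X)) (j : Fin 3) :
    ∃ e : Fin 3 → AddMonoidAlgebra K (Fin 3 → ℤ), (∀ i, e i ∈ laurentPart K {j}) ∧
      (e ⬝ᵥ fun i => toLaurent (f i)) = 1 := by
  have h1 : (MvPolynomial.X j : MvPolynomial (Fin 3) K) ∈ (Ideal.span (Set.range f)).radical := by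
    rw [hf]; exact Ideal.subset_span ⟨j, rfl⟩
  obtain ⟨N, hN⟩ := h1
  obtain ⟨c, hc⟩ := Submodule.mem_span_range_iff_exists_fun _ |>.mp hN
  refine ⟨fun i => AddMonoidAlgebra.single (-(N • Pi.single j 1)) 1 * toLaurent (c i),
    fun i => ?_, ?_⟩
  · refine mul_mem (single_mem_laurentPart (fun i hi => ?_) 1)
      (laurentPart_mono (Finset.empty_subset _) (toLaurent_mem _))
    have : i ≠ j := by simpa using hi
    simp [Pi.single_eq_of_ne this]
  · have h2 := congrArg toLaurent hc
    simp only [smul_eq_mul, map_sum, map_mul, map_pow] at h2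
    simp only [dotProduct, mul_assoc, ← Finset.mul_sum, h2]
    rw [toLaurent, MvPolynomial.aeval_X, AddMonoidAlgebra.single_pow,
      AddMonoidAlgebra.single_mul_single, neg_add_cancel, one_pow, one_mul]
    rfl

/-- Two unimodular triples on the punctured affine space cannot be orthogonal: the kernel of `f`
would be an extension of trivial line bundles, so that `f` would be surjective on global
functions, although all `fᵢ` vanish at the origin. -/
theorem sum_mul_ne_zero {f g : Fin 3 → MvPolynomial (Fin 3) K}
    (hf : (Ideal.span (Set.range f)).radical = Ideal.span (Set.range MvPolynomial.X))
    (hg : (Ideal.span (Set.range g)).radical = Ideal.span (Set.range MvPolynomial.X)) :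
    ∑ i, f i * g i ≠ 0 := by
  intro h0
  choose e he hef using exists_laurent_inverse hf
  choose e' he' heg using exists_laurent_inverse hg
  obtain ⟨w, hw, hfw⟩ := exists_dot_eq_one (fun i => toLaurent_mem (f i))
    (fun i => toLaurent_mem (g i))
    (by simpa only [dotProduct, map_sum, map_mul, map_zero] using congrArg toLaurent h0) he he' hef heg
  have h1 : ∀ x ∈ Ideal.span (Set.range (MvPolynomial.X : Fin 3 → MvPolynomial (Fin 3) K)),
      ∀ y ∈ laurentPart K ∅, (toLaurent x * y).coeff 0 = 0 := by
    intro x hx y hy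
    obtain ⟨c, rfl⟩ := Submodule.mem_span_range_iff_exists_fun _ |>.mp hx
    rw [map_sum, Finset.sum_mul, AddMonoidAlgebra.coeff_sum, Finsupp.finsetSum_apply]
    refine Finset.sum_eq_zero fun i _ => ?_
    rw [smul_eq_mul, mul_comm (c i), map_mul, mul_assoc, toLaurent, MvPolynomial.aeval_X,
      AddMonoidAlgebra.coeff_single_mul_apply, one_mul]
    exact coeff_eq_zero_of_mem_laurentPart (mul_mem (toLaurent_mem (c i)) hy) (i := i)
      (Finset.notMem_empty _) (by simp)
  have h2 := congrArg (fun z => z.coeff 0) hfw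
  simp only [dotProduct, AddMonoidAlgebra.coeff_sum, Finsupp.finsetSum_apply] at h2
  rw [Finset.sum_eq_zero fun i _ => h1 (f i) (by
    rw [← hf]; exact Ideal.le_radical (Ideal.subset_span ⟨i, rfl⟩)) _ (hw i)] at h2
  simp [AddMonoidAlgebra.one_def] at h2

end Laurent

/-! ### Evaluation of homogeneous polynomials on the curve -/

section Homogeneous

variable {K : Type*} [Field K]

theorem homogeneousComponent_mul_of_isHomogeneous {σ : Type*} {f : MvPolynomial σ K} {d : ℕ}
    (hf : f.IsHomogeneous d) (c : MvPolynomial σ K) (n : ℕ) :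
    homogeneousComponent n (c * f) = if d ≤ n then homogeneousComponent (n - d) c * f else 0 := by
  let := gradedAlgebra (σ := σ) (R := K)
  have key : ∀ (y : MvPolynomial σ K) (i : ℕ),
      (DirectSum.decompose (homogeneousSubmodule σ K) y i : MvPolynomial σ K) =
        homogeneousComponent i y := decomposition.decompose'_apply
  rw [← key, ← key]
  exact DirectSum.coe_decompose_mul_of_right_mem (homogeneousSubmodule σ K) n
    ((mem_homogeneousSubmodule d f).mpr hf)

theorem aeval_mul_eq {σ A : Type*} [CommRing A] [Algebra K A] {f : MvPolynomial σ K} {d : ℕ}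
    (hf : f.IsHomogeneous d) (c : A) (x : σ → A) :
    aeval (fun i => c * x i) f = c ^ d * aeval x f := by
  rw [aeval_def, aeval_def, eval₂_eq, eval₂_eq, Finset.mul_sum]
  refine Finset.sum_congr rfl fun α hα => ?_
  have h1 : c ^ d = ∏ i ∈ α.support, c ^ α i := by
    rw [Finset.prod_pow_eq_pow_sum, hf.degree_eq_sum_deg_support hα]
  rw [h1, mul_left_comm, ← Finset.prod_mul_distrib]
  simp only [mul_pow]

theorem exists_eval_ne_zero [Infinite K] {F : MvPolynomial (Fin 3) K} (hF0 : F ≠ 0) {k : ℕ}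
    (hF : F.IsHomogeneous k) : ∃ P : Fin 3 → K, P 2 = 1 ∧ aeval P F ≠ 0 := by
  have h1 : F * X 2 ≠ 0 := mul_ne_zero hF0 (X_ne_zero 2)
  obtain ⟨Q, hQ⟩ : ∃ Q : Fin 3 → K, eval Q (F * X 2) ≠ 0 := by
    by_contra! h
    exact h1 (MvPolynomial.funext fun Q => by rw [h Q, map_zero])
  rw [map_mul, eval_X, mul_ne_zero_iff] at hQ
  refine ⟨fun i => (Q 2)⁻¹ * Q i, inv_mul_cancel₀ hQ.2, ?_⟩
  rw [aeval_mul_eq hF]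
  exact mul_ne_zero (pow_ne_zero _ (inv_ne_zero hQ.2)) hQ.1

variable {Ω : Type*} [Field Ω] [Algebra K Ω]

/-- If the point `P` (with last coordinate `1`) does not lie on the curve, then projection from
`P` is finite: coordinates are bounded at each place where the linear forms vanishing at `P` are. -/
theorem div_mem_valuationSubring {F : MvPolynomial (Fin 3) K} {k : ℕ} (hF : F.IsHomogeneous k)
    {x : Fin 3 → Ω} (hx : aeval x F = 0) {P : Fin 3 → K} (hP : aeval P F ≠ 0)
    {w : Ω} (V : ValuationSubring Ω) (hV : ∀ c : K, algebraMap K Ω c ∈ V)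
    (h : ∀ i, (x i - algebraMap K Ω (P i) * x 2) / w ∈ V) (i : Fin 3) : x i / w ∈ V := by
  have key : x 2 / w ∈ V := by
    by_contra hζ
    have h2 : x 2 / w ≠ 0 := fun h0 => hζ (h0 ▸ zero_mem _)
    have hε : (x 2 / w)⁻¹ ∈ V := (V.mem_or_inv_mem _).resolve_left hζ
    have hx2 : x 2 ≠ 0 := fun h0 => h2 (by rw [h0, zero_div])
    have hw : w ≠ 0 := fun h0 => h2 (by rw [h0, div_zero])
    let ι : K →+* V := (algebraMap K Ω).codRestrict V.toSubring hV
    let δ : Fin 3 → V := fun i => ⟨_, h i⟩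
    let ε : V := ⟨_, hε⟩
    have hres : IsLocalRing.residue V ε = 0 := by
      rw [IsLocalRing.residue_eq_zero_iff, IsLocalRing.mem_maximalIdeal, mem_nonunits_iff]
      intro hu
      obtain ⟨y, hy⟩ := hu.exists_right_inv
      have hy' : (x 2 / w)⁻¹ * (y : Ω) = 1 := congrArg Subtype.val hy
      have : (y : Ω) = x 2 / w := by
        rw [← inv_inj, eq_comm]; exact eq_inv_of_mul_eq_one_left hy'
      exact hζ (this ▸ y.2)
    have h3 : eval₂Hom ι (fun i => ι (P i) + δ i * ε) F = 0 := by
      have h4 : V.subtype (eval₂Hom ι (fun i => ι (P i) + δ i * ε) F) =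
          aeval (fun i => (x 2)⁻¹ * x i) F := by
        rw [map_eval₂Hom, aeval_def]
        change eval₂ _ _ F = _
        congr 1
        ext i
        change algebraMap K Ω (P i) + (x i - algebraMap K Ω (P i) * x 2) / w * (x 2 / w)⁻¹ = _
        field_simp
        ring
      rw [aeval_mul_eq hF, hx, mul_zero] at h4
      exact Subtype.val_injective h4
    have h5 := congrArg (IsLocalRing.residue V) h3
    rw [map_eval₂Hom, map_zero] at h5
    have h6 : (fun i => IsLocalRing.residue V (ι (P i) + δ i * ε)) =
        fun i => ((IsLocalRing.residue V).comp ι) (P i) := by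
      ext i
      rw [map_add, map_mul, hres, mul_zero, add_zero]; rfl
    rw [h6] at h5
    have h7 : ((IsLocalRing.residue V).comp ι) (aeval P F) = 0 := by
      rw [← h5]
      change _ = eval₂ _ _ F
      rw [aeval_def, hom_eval₂]
      rfl
    exact hP ((map_eq_zero _).mp h7)
  have h1 := add_mem (h i) (mul_mem (hV (P i)) key)
  convert h1 using 1
  ring

/-- The coordinate ring of the chart `w ≠ 0` of the curve with generic point `x`, where `w` is the
value at `x` of a linear form. -/
def coordRing (K : Type*) {Ω : Type*} [Field K] [Field Ω] [Algebra K Ω] (x : Fin 3 → Ω) (w : Ω) :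
    Subalgebra K Ω :=
  Algebra.adjoin K (Set.range fun i => x i / w)

theorem aeval_mem_twist (x : Fin 3 → Ω) (w : Ω) {h : MvPolynomial (Fin 3) K} {n : ℕ}
    (hh : h.IsHomogeneous n) : aeval x h ∈ twist w (coordRing K x w) n := by
  rw [mem_twist, zpow_neg, zpow_natCast, ← inv_pow, mul_comm, ← aeval_mul_eq hh]
  have h1 : ∀ i, w⁻¹ * x i ∈ coordRing K x w := fun i => by
    rw [mul_comm, ← div_eq_mul_inv]
    exact Algebra.subset_adjoin ⟨i, rfl⟩
  exact Subalgebra.mvPolynomial_aeval_coe _ (fun i => (⟨_, h1 i⟩ : coordRing K x w)) h ▸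
    Subtype.coe_prop _

theorem homogeneousComponent_coeff_mem_twist (x : Fin 3 → Ω) (w : Ω)
    (c : MvPolynomial (Fin 3) K) (n d : ℕ) :
    aeval x (if d ≤ n then homogeneousComponent (n - d) c else 0) ∈
      twist w (coordRing K x w) ((n : ℤ) - d) := by
  split_ifs with h
  · rw [← Nat.cast_sub h]
    exact aeval_mem_twist x w (homogeneousComponent_isHomogeneous _ _)
  · rw [map_zero]; exact zero_mem _

/-- Since a power of a linear form `L` lies in `(f)`, the triple `f` is unimodular where `L` is
invertible, with coefficients of the right degrees. -/
theorem exists_local_inverse {f : Fin 3 → MvPolynomial (Fin 3) K} {d : Fin 3 → ℕ}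
    (hfh : ∀ i, (f i).IsHomogeneous (d i))
    (hf : (Ideal.span (Set.range f)).radical = Ideal.span (Set.range X))
    {L : MvPolynomial (Fin 3) K} (hL : L.IsHomogeneous 1) (hL' : L ∈ Ideal.span (Set.range X))
    (x : Fin 3 → Ω) (hw : aeval x L ≠ 0) :
    ∃ e : Fin 3 → Ω, (∀ i, e i ∈ twist (aeval x L) (coordRing K x (aeval x L)) (-d i)) ∧
      (e ⬝ᵥ fun i => aeval x (f i)) = 1 := by
  rw [← hf] at hL'
  obtain ⟨N, hN⟩ := hL'
  obtain ⟨c, hc⟩ := Submodule.mem_span_range_iff_exists_fun _ |>.mp hN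
  have h1 := congrArg (homogeneousComponent N) hc
  have h2 : (L ^ N).IsHomogeneous N := by simpa using hL.pow N
  rw [homogeneousComponent_eq_self h2, map_sum] at h1
  simp only [smul_eq_mul, homogeneousComponent_mul_of_isHomogeneous (hfh _)] at h1
  set w := aeval x L with hwdef
  refine ⟨fun i => aeval x (if d i ≤ N then homogeneousComponent (N - d i) (c i) else 0) *
    w ^ (-(N : ℤ)), fun i => ?_, ?_⟩
  · refine mul_mem_twist hw (homogeneousComponent_coeff_mem_twist x w (c i) N (d i))
      (n := -N) ?_ (by ring)
    rw [mem_twist, neg_neg, ← zpow_add₀ hw, neg_add_cancel, zpow_zero]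
    exact one_mem _
  · have h3 := congrArg (aeval x) h1
    rw [map_sum, map_pow, ← hwdef] at h3
    have h4 : ∀ i, aeval x (if d i ≤ N then homogeneousComponent (N - d i) (c i) * f i else 0) =
        aeval x (if d i ≤ N then homogeneousComponent (N - d i) (c i) else 0) * aeval x (f i) := by
      intro i
      split_ifs
      · rw [map_mul]
      · rw [map_zero, zero_mul]
    simp only [h4] at h3
    simp only [dotProduct, mul_right_comm _ (w ^ (-(N : ℤ))), ← Finset.sum_mul, h3]
    rw [zpow_neg, zpow_natCast, mul_inv_cancel₀ (pow_ne_zero _ hw)]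

/-! ### Projection from a point off the curve -/

theorem isHomogeneous_projection (P : Fin 3 → K) (i : Fin 3) :
    (X i - C (P i) * X 2 : MvPolynomial (Fin 3) K).IsHomogeneous 1 :=
  (isHomogeneous_X K i).sub (isHomogeneous_C_mul_X _ _)

theorem projection_mem_span (P : Fin 3 → K) (i : Fin 3) :
    (X i - C (P i) * X 2 : MvPolynomial (Fin 3) K) ∈ Ideal.span (Set.range X) :=
  sub_mem (Ideal.subset_span ⟨i, rfl⟩) (Ideal.mul_mem_left _ _ (Ideal.subset_span ⟨2, rfl⟩))

/-- The linear forms vanishing at a point off the curve remain linearly independent on the curve. -/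
theorem linear_form_not_dvd {F : MvPolynomial (Fin 3) K} {k : ℕ} (hF : F.IsHomogeneous k)
    (hk : k ≠ 0) {P : Fin 3 → K} (hP2 : P 2 = 1) (hP : aeval P F ≠ 0) {a b : K}
    (h : F ∣ C a * (X 0 - C (P 0) * X 2) + C b * (X 1 - C (P 1) * X 2)) : a = 0 ∧ b = 0 := by
  set L : MvPolynomial (Fin 3) K :=
    C a * (X 0 - C (P 0) * X 2) + C b * (X 1 - C (P 1) * X 2) with hL
  obtain ⟨c, hc⟩ := h
  have hF0 : F ≠ 0 := fun h => hP (by rw [h, map_zero])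
  have hc0 : c = 0 := by
    by_contra hc0
    have h1 : L.IsHomogeneous 1 :=
      ((isHomogeneous_projection P 0).C_mul a).add ((isHomogeneous_projection P 1).C_mul b)
    have h2 := h1.totalDegree_le
    rw [hc, totalDegree_mul_of_isDomain hF0 hc0, hF.totalDegree hF0] at h2
    have h3 : c.totalDegree = 0 := by omega
    rw [totalDegree_eq_zero_iff_eq_C] at h3
    have h4 := congrArg (aeval P) hc
    rw [hL, h3] at h4
    simp only [map_add, map_mul, map_sub, aeval_X, aeval_C, hP2, mul_one, Algebra.algebraMap_self,
      RingHom.id_apply, sub_self, mul_zero, add_zero] at h4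
    have h5 : coeff 0 c = 0 := (mul_eq_zero.mp h4.symm).resolve_left hP
    rw [h5, C_0] at h3
    exact hc0 h3
  rw [hc0, mul_zero] at hc
  constructor
  · simpa [hL] using congrArg (aeval (![1, 0, 0] : Fin 3 → K)) hc
  · simpa [hL] using congrArg (aeval (![0, 1, 0] : Fin 3 → K)) hc

/-- The chart `w ≠ 0` of the curve is integral over the corresponding chart, with coordinate `t`,
of the projective line. -/
theorem coordRing_le_chartRing {F : MvPolynomial (Fin 3) K} {k : ℕ} (hF : F.IsHomogeneous k)
    {x : Fin 3 → Ω} (hx : aeval x F = 0) {P : Fin 3 → K} (hP : aeval P F ≠ 0) {w t : Ω}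
    (h : ∀ V : ValuationSubring Ω, t ∈ V → ∀ i, (x i - algebraMap K Ω (P i) * x 2) / w ∈ V) :
    coordRing K x w ≤ chartRing K t := by
  refine Algebra.adjoin_le ?_
  rintro _ ⟨i, rfl⟩
  exact mem_chartRing_iff.mpr fun V hV ht => div_mem_valuationSubring hF hx hP V hV (h V ht) i

theorem coordRing_fg (x : Fin 3 → Ω) (w : Ω) : (coordRing K x w).FG :=
  Subalgebra.fg_def.mpr ⟨_, Set.finite_range _, rfl⟩

theorem exists_isChart {F : MvPolynomial (Fin 3) K} {k : ℕ} {d : Fin 3 → ℕ}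
    {f g : Fin 3 → MvPolynomial (Fin 3) K} (hfh : ∀ i, (f i).IsHomogeneous (d i))
    (hgh : ∀ i, (g i).IsHomogeneous (k - d i)) (hk : ∀ i, d i ≤ k)
    (hfrad : (Ideal.span (Set.range f)).radical = Ideal.span (Set.range X))
    (hgrad : (Ideal.span (Set.range g)).radical = Ideal.span (Set.range X))
    (hF : F.IsHomogeneous k) {x : Fin 3 → Ω} (hx : aeval x F = 0) {P : Fin 3 → K}
    (hP : aeval P F ≠ 0) {L : MvPolynomial (Fin 3) K} (hL : L.IsHomogeneous 1)
    (hL' : L ∈ Ideal.span (Set.range X)) (hw : aeval x L ≠ 0) {t : Ω}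
    (h : ∀ V : ValuationSubring Ω, t ∈ V →
      ∀ i, (x i - algebraMap K Ω (P i) * x 2) / aeval x L ∈ V) :
    ∃ e e' : Fin 3 → Ω, IsChart (aeval x L) t (coordRing K x (aeval x L)) (fun i => (d i : ℤ)) k
      (fun i => aeval x (f i)) (fun i => aeval x (g i)) e e' := by
  obtain ⟨e, he, hef⟩ := exists_local_inverse hfh hfrad hL hL' x hw
  obtain ⟨e', he₂, heg⟩ := exists_local_inverse hgh hgrad hL hL' x hw
  have hcast : ∀ i, ((k - d i : ℕ) : ℤ) = k - d i := fun i => Nat.cast_sub (hk i)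
  refine ⟨e, e', hw, coordRing_le_chartRing hF hx hP h, coordRing_fg _ _,
    fun i => aeval_mem_twist x _ (hfh i), fun i => ?_, he, fun i => ?_, hef, heg⟩
  · simpa only [hcast] using aeval_mem_twist x (aeval x L) (hgh i)
  · simpa only [hcast, neg_sub] using he₂ i

/-- A homogeneous `r` of degree at least `k`, or satisfying a homogeneous tight closure relation, is
a combination of the `fᵢ` with coefficients integral over the coordinate ring; integrality is
expressed by valuation rings, and `x` is a generic point of the curve with values in `Ω`. -/
theorem exists_integral_solution [IsAlgClosed K] (p : ℕ) [Fact p.Prime] [CharP Ω p] [IsAlgClosed Ω]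
    {F : MvPolynomial (Fin 3) K} {k : ℕ} {d : Fin 3 → ℕ}
    {f g : Fin 3 → MvPolynomial (Fin 3) K} (hfh : ∀ i, (f i).IsHomogeneous (d i))
    (hgh : ∀ i, (g i).IsHomogeneous (k - d i)) (hsum : d 0 + d 1 + d 2 = 2 * k)
    (hk : ∀ i, d i ≤ k)
    (hfrad : (Ideal.span (Set.range f)).radical = Ideal.span (Set.range X))
    (hgrad : (Ideal.span (Set.range g)).radical = Ideal.span (Set.range X))
    (hF : F = ∑ i, f i * g i) {x : Fin 3 → Ω}
    (hx : ∀ h : MvPolynomial (Fin 3) K, aeval x h = 0 ↔ F ∣ h)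
    {r : MvPolynomial (Fin 3) K} {m : ℕ} (hr : r.IsHomogeneous m)
    (hrm : k ≤ m ∨ ∃ (A : MvPolynomial (Fin 3) K) (D e₀ : ℕ), A.IsHomogeneous D ∧ ¬ F ∣ A ∧
      ∀ e ≥ e₀, ∃ c : Fin 3 → MvPolynomial (Fin 3) K,
        F ∣ A * r ^ p ^ e - ∑ i, c i * f i ^ p ^ e) :
    ∃ w : Fin 3 → Ω, ∑ i, aeval x (f i) * w i = aeval x r ∧
      ∀ i, ∀ V : ValuationSubring Ω, (∀ h : MvPolynomial (Fin 3) K, aeval x h ∈ V) → w i ∈ V := by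
  have hp := (Fact.out : p.Prime)
  have hFh : F.IsHomogeneous k := by
    rw [hF]
    refine IsHomogeneous.sum _ _ _ fun i _ => ?_
    simpa only [Nat.add_sub_cancel' (hk i)] using (hfh i).mul (hgh i)
  have hF0 : F ≠ 0 := hF ▸ sum_mul_ne_zero hfrad hgrad
  have hxF : aeval x F = 0 := (hx F).mpr dvd_rfl
  have hk0 : k ≠ 0 := by
    rintro rfl
    have h1 : (1 : MvPolynomial (Fin 3) K) = C (coeff 0 F)⁻¹ * F := by
      have h2 : F = C (coeff 0 F) := by
        rw [← totalDegree_eq_zero_iff_eq_C, hFh.totalDegree hF0]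
      have h3 : coeff 0 F ≠ 0 := fun h => hF0 (by rw [h2, h, C_0])
      conv_rhs => rw [h2]
      rw [coeff_C, if_pos rfl, ← C_mul, inv_mul_cancel₀ h3, C_1]
    have h2 := (hx 1).mpr ⟨_, h1.trans (mul_comm _ _)⟩
    rw [map_one] at h2
    exact one_ne_zero h2
  have : Infinite K := IsAlgClosed.instInfinite
  obtain ⟨P, hP2, hP⟩ := exists_eval_ne_zero hF0 hFh
  have hindep : ∀ a b : K, algebraMap K Ω a * aeval x (X 0 - C (P 0) * X 2) +
      algebraMap K Ω b * aeval x (X 1 - C (P 1) * X 2) = 0 → a = 0 ∧ b = 0 := by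
    intro a b hab
    refine linear_form_not_dvd hFh hk0 hP2 hP ((hx _).mp ?_)
    simpa only [map_add, map_mul, aeval_C] using hab
  set L : MvPolynomial (Fin 3) K := X 0 - C (P 0) * X 2 with hL
  set M : MvPolynomial (Fin 3) K := X 1 - C (P 1) * X 2 with hM
  have hu0 : aeval x L ≠ 0 := fun h =>
    one_ne_zero (hindep 1 0 (by rw [h, mul_zero, map_zero, zero_mul, add_zero])).1
  have hv0 : aeval x M ≠ 0 := fun h =>
    one_ne_zero (hindep 0 1 (by rw [h, mul_zero, map_zero, zero_mul, add_zero])).2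
  have ht : aeval x M / aeval x L ∉ Set.range (algebraMap K Ω) := by
    rintro ⟨c, hc⟩
    refine one_ne_zero (hindep (-c) 1 ?_).2
    rw [map_neg, hc, map_one, neg_mul, div_mul_cancel₀ _ hu0, one_mul, neg_add_cancel]
  have hLx : aeval x L = x 0 - algebraMap K Ω (P 0) * x 2 := by
    simp only [hL, map_sub, map_mul, aeval_X, aeval_C]
  have hMx : aeval x M = x 1 - algebraMap K Ω (P 1) * x 2 := by
    simp only [hM, map_sub, map_mul, aeval_X, aeval_C]
  have h2x : x 2 - algebraMap K Ω (P 2) * x 2 = 0 := by rw [hP2, map_one, one_mul, sub_self]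
  obtain ⟨eu, eu', hu⟩ := exists_isChart hfh hgh hk hfrad hgrad hFh hxF hP
    (isHomogeneous_projection P 0) (projection_mem_span P 0) hu0 (t := aeval x M / aeval x L) (by
      intro V hV i
      fin_cases i
      · change (x 0 - algebraMap K Ω (P 0) * x 2) / aeval x L ∈ V
        rw [← hLx, div_self hu0]; exact one_mem _
      · change (x 1 - algebraMap K Ω (P 1) * x 2) / aeval x L ∈ V
        rwa [← hMx]
      · change (x 2 - algebraMap K Ω (P 2) * x 2) / aeval x L ∈ V
        rw [h2x, zero_div]; exact zero_mem _)
  obtain ⟨ev, ev', hv⟩ := exists_isChart hfh hgh hk hfrad hgrad hFh hxF hP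
    (isHomogeneous_projection P 1) (projection_mem_span P 1) hv0 (t := aeval x L / aeval x M) (by
      intro V hV i
      fin_cases i
      · change (x 0 - algebraMap K Ω (P 0) * x 2) / aeval x M ∈ V
        rwa [← hLx]
      · change (x 1 - algebraMap K Ω (P 1) * x 2) / aeval x M ∈ V
        rw [← hMx, div_self hv0]; exact one_mem _
      · change (x 2 - algebraMap K Ω (P 2) * x 2) / aeval x M ∈ V
        rw [h2x, zero_div]; exact zero_mem _)
  have hfg : (fun i => aeval x (f i)) ⬝ᵥ (fun i => aeval x (g i)) = 0 := by
    rw [← hxF, hF]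
    simp only [dotProduct, map_sum, map_mul]
  obtain ⟨w, hw, hwm⟩ := exists_glued_solution p ht hu hv (by exact_mod_cast hsum) hfg
    (m := m) (aeval_mem_twist x _ hr) (aeval_mem_twist x _ hr) (by
      refine hrm.imp (fun h => by exact_mod_cast h) ?_
      rintro ⟨A, D, e₀, hA, hFA, hc⟩
      refine ⟨aeval x A, D, e₀, fun h => hFA ((hx A).mp h), aeval_mem_twist x _ hA,
        aeval_mem_twist x _ hA, fun e he => ?_⟩
      obtain ⟨c, b, hb⟩ := hc e he
      set q := p ^ e with hq
      -- pass to the component of degree `D + q m` of the relation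
      have h1 : (A * r ^ q).IsHomogeneous (D + m * q) := hA.mul (hr.pow q)
      have h2 : A * r ^ q = ∑ i, c i * f i ^ q + b * F := by linear_combination hb
      have h3 := congrArg (homogeneousComponent (D + m * q)) h2
      rw [homogeneousComponent_eq_self h1, map_add, map_sum] at h3
      simp only [homogeneousComponent_mul_of_isHomogeneous hFh,
        homogeneousComponent_mul_of_isHomogeneous ((hfh _).pow q)] at h3
      have hdeg : ∀ i, (((D + m * q : ℕ) : ℤ) - ((d i * q : ℕ) : ℤ)) =
          (D : ℤ) + (q : ℕ) * ((m : ℤ) - d i) := fun i => by push_cast; ring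
      refine ⟨fun i => aeval x (if d i * q ≤ D + m * q then
        homogeneousComponent (D + m * q - d i * q) (c i) else 0), fun i => ?_, fun i => ?_, ?_⟩
      · rw [← hdeg]; exact homogeneousComponent_coeff_mem_twist x _ (c i) _ _
      · rw [← hdeg]; exact homogeneousComponent_coeff_mem_twist x _ (c i) _ _
      · have h4 := congrArg (aeval x) h3
        have h5 : aeval x (if k ≤ D + m * q then
            homogeneousComponent (D + m * q - k) b * F else 0) = 0 := by
          split_ifs
          · rw [map_mul, hxF, mul_zero]
          · rw [map_zero]
        rw [map_add, h5, add_zero, map_mul, map_pow, map_sum] at h4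
        rw [h4]
        refine Finset.sum_congr rfl fun i _ => ?_
        rw [Pi.pow_apply]
        beta_reduce
        split_ifs
        · rw [map_mul, map_pow, mul_comm]
        · rw [map_zero, mul_zero])
  refine ⟨w, hw, fun i V hV => ?_⟩
  exact mem_valuationSubring_of_mem_twist hu0 hv0 ht (hwm i).1 (hwm i).2 V
    (fun c => by simpa only [aeval_C] using hV (C c)) (hV L) (hV M)

end Homogeneous

/-! ### Plus closure and tight closure -/
section Closures

variable {R : Type} [CommRing R]

theorem bracketPow_span {p : ℕ} [Fact p.Prime] [CharP R p] (a : Fin 3 → R) (e : ℕ) :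
    bracketPow (Ideal.span (Set.range a)) (p ^ e) =
      Ideal.span (Set.range fun i => a i ^ p ^ e) := by
  have : bracketPow (Ideal.span (Set.range a)) (p ^ e) =
      (Ideal.span (Set.range a)).map (iterateFrobenius R p e) := rfl
  rw [this, Ideal.map_span, ← Set.range_comp]
  rfl

/-- A module-finite extension domain `S` of a domain `R` admits an `R`-linear form not vanishing
at `1`: clear denominators in a linear form on the fraction field of `S`. -/
theorem exists_linearMap_one_ne_zero [IsDomain R] {S : Type} [CommRing S] [IsDomain S]
    [Algebra R S] [FaithfulSMul R S] [Module.Finite R S] :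
    ∃ φ : S →ₗ[R] R, φ 1 ≠ 0 := by
  classical
  let : Algebra (FractionRing R) (FractionRing S) := FractionRing.liftAlgebra R (FractionRing S)
  have hst : IsScalarTower R (FractionRing R) (FractionRing S) :=
    FractionRing.isScalarTower_liftAlgebra R (FractionRing S)
  obtain ⟨ψ, hψ⟩ : ∃ ψ : FractionRing S →ₗ[FractionRing R] FractionRing R, ψ 1 ≠ 0 := by
    by_contra! h
    exact one_ne_zero ((Module.forall_dual_apply_eq_zero_iff (FractionRing R) _).mp h)
  let ψ' : S →ₗ[R] FractionRing R :=
    (ψ.restrictScalars R).comp (IsScalarTower.toAlgHom R S (FractionRing S)).toLinearMap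
  obtain ⟨s, hs⟩ := (Module.Finite.fg_top : (⊤ : Submodule R S).FG)
  obtain ⟨b, hb⟩ := IsLocalization.exist_integer_multiples_of_finset (nonZeroDivisors R)
    (s.image ψ')
  have hinj := IsFractionRing.injective R (FractionRing R)
  let ι : R ≃ₗ[R] LinearMap.range (Algebra.linearMap R (FractionRing R)) :=
    LinearEquiv.ofInjective (Algebra.linearMap R (FractionRing R)) hinj
  have hmem : ∀ y, ((b : R) • ψ') y ∈ LinearMap.range (Algebra.linearMap R (FractionRing R)) := by
    have : (⊤ : Submodule R S) ≤ (LinearMap.range (Algebra.linearMap R (FractionRing R))).comap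
        ((b : R) • ψ') := by
      rw [← hs, Submodule.span_le]
      intro y hy
      obtain ⟨c, hc⟩ := hb (ψ' y) (Finset.mem_image_of_mem _ hy)
      exact ⟨c, hc⟩
    exact fun y => this (Submodule.mem_top)
  refine ⟨ι.symm.toLinearMap.comp (((b : R) • ψ').codRestrict _ hmem), fun h => ?_⟩
  have h1 : ((b : R) • ψ').codRestrict _ hmem 1 = 0 := by
    simpa using h
  have h2 : (b : R) • ψ' 1 = 0 := congrArg Subtype.val h1
  have h3 : ψ' 1 = ψ 1 := by
    change ψ (algebraMap S (FractionRing S) 1) = _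
    rw [map_one]
  rw [h3, Algebra.smul_def] at h2
  rcases mul_eq_zero.mp h2 with h4 | h4
  · exact nonZeroDivisors.ne_zero b.2 (hinj (by rw [h4, map_zero]))
  · exact hψ h4

theorem plusClosure_subset_tightClosure [IsDomain R] {p : ℕ} [Fact p.Prime] [CharP R p]
    (a : Fin 3 → R) :
    plusClosure R (Ideal.span (Set.range a)) ⊆ tightClosure p (Ideal.span (Set.range a)) := by
  rintro r ⟨S, _, _, φ, hinj, hfin, hr⟩
  let := φ.toAlgebra
  have : FaithfulSMul R S := (faithfulSMul_iff_algebraMap_injective R S).mpr hinj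
  have : Module.Finite R S := hfin
  have : CharP S p := charP_of_injective_ringHom hinj p
  obtain ⟨ψ, hψ⟩ := exists_linearMap_one_ne_zero (R := R) (S := S)
  refine ⟨ψ 1, hψ, 0, fun e _ => ?_⟩
  rw [bracketPow_span]
  rw [Ideal.map_span, ← Set.range_comp] at hr
  obtain ⟨s, hs⟩ := (Ideal.mem_span_range_iff_exists_fun).mp hr
  have h1 : algebraMap R S r ^ p ^ e = ∑ i, s i ^ p ^ e * algebraMap R S (a i) ^ p ^ e := by
    have : algebraMap R S r = ∑ i, s i * algebraMap R S (a i) := hs.symm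
    rw [this, sum_pow_char_pow]
    simp only [mul_pow]
  have h2 : (r ^ p ^ e) • (1 : S) = ∑ i, (a i ^ p ^ e) • (s i ^ p ^ e) := by
    rw [Algebra.smul_def, mul_one, map_pow, h1]
    exact Finset.sum_congr rfl fun i _ => by rw [Algebra.smul_def, map_pow, mul_comm]
  have h3 := congrArg ψ h2
  rw [map_smul, map_sum] at h3
  simp only [map_smul, smul_eq_mul] at h3
  rw [mul_comm, h3]
  exact Ideal.sum_mem _ fun i _ => Ideal.mul_mem_right _ _ (Ideal.subset_span ⟨i, rfl⟩)

/-- If `r = ∑ aᵢ wᵢ` with `wᵢ` integral over `R` in an extension field, then `r` lies in the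
plus closure of `(a₀, a₁, a₂)`: use the finite extension `R[w₀, w₁, w₂]`. -/
theorem mem_plusClosure_of_isIntegral {Ω : Type} [Field Ω] [Algebra R Ω]
    (hinj : Function.Injective (algebraMap R Ω)) (a : Fin 3 → R) (r : R) (w : Fin 3 → Ω)
    (hw : ∀ i, IsIntegral R (w i))
    (hr : ∑ i, algebraMap R Ω (a i) * w i = algebraMap R Ω r) :
    r ∈ plusClosure R (Ideal.span (Set.range a)) := by
  refine ⟨Algebra.adjoin R (Set.range w), inferInstance, inferInstance, algebraMap R _,
    ?_, ?_, ?_⟩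
  · intro y z h
    exact hinj (congrArg Subtype.val h)
  · rw [RingHom.finite_algebraMap]
    exact Algebra.finite_adjoin_of_finite_of_isIntegral (Set.finite_range w)
      (by rintro _ ⟨i, rfl⟩; exact hw i)
  · rw [Ideal.map_span, ← Set.range_comp, Ideal.mem_span_range_iff_exists_fun]
    refine ⟨fun i => ⟨w i, Algebra.subset_adjoin ⟨i, rfl⟩⟩, Subtype.ext ?_⟩
    change _ = algebraMap R Ω r
    rw [← hr, AddSubmonoidClass.coe_finsetSum]
    exact Finset.sum_congr rfl fun i _ => mul_comm _ _

end Closures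

/-! ### Homogeneity of tight closure and the main result -/

section Main

variable {K : Type} [Field K]

/-- Tight closure is homogeneous: a tight closure relation for `ρ` with multiplier `A` gives,
in degree `i + q j`, one for the component `ρⱼ` with multiplier `Aᵢ`, as soon as
`q > deg A` separates the degrees. -/
theorem exists_homogeneous_multiplier (p : ℕ) [Fact p.Prime] [CharP K p]
    {F : MvPolynomial (Fin 3) K} {k : ℕ} (hFh : F.IsHomogeneous k) {d : Fin 3 → ℕ}
    {f : Fin 3 → MvPolynomial (Fin 3) K} (hfh : ∀ i, (f i).IsHomogeneous (d i))
    {A ρ : MvPolynomial (Fin 3) K} (hA : ¬ F ∣ A) {e₀ : ℕ}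
    (h : ∀ e ≥ e₀, ∃ c : Fin 3 → MvPolynomial (Fin 3) K,
        F ∣ A * ρ ^ p ^ e - ∑ i, c i * f i ^ p ^ e) :
    ∃ (B : MvPolynomial (Fin 3) K) (D e₁ : ℕ), B.IsHomogeneous D ∧ ¬ F ∣ B ∧
      ∀ j, ∀ e ≥ e₁, ∃ c : Fin 3 → MvPolynomial (Fin 3) K,
        F ∣ B * homogeneousComponent j ρ ^ p ^ e - ∑ i, c i * f i ^ p ^ e := by
  have hp := (Fact.out : p.Prime)
  obtain ⟨D, hD⟩ : ∃ D, ¬ F ∣ homogeneousComponent D A := by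
    by_contra! hall
    rw [← sum_homogeneousComponent A] at hA
    exact hA (Finset.dvd_sum fun i _ => hall i)
  have hDA : D ≤ A.totalDegree := by
    by_contra! hlt
    exact hD (by rw [homogeneousComponent_eq_zero _ _ hlt]; exact dvd_zero _)
  refine ⟨homogeneousComponent D A, D, max e₀ (A.totalDegree + 1),
    homogeneousComponent_isHomogeneous D A, hD, fun j e he => ?_⟩
  obtain ⟨c, b, hb⟩ := h e (le_trans (le_max_left _ _) he)
  set q := p ^ e with hq
  have hAq : A.totalDegree < q := lt_of_lt_of_le (Nat.lt_of_succ_le (le_trans (le_max_right _ _) he))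
    (Nat.lt_pow_self hp.one_lt).le
  have h1 : ∑ l ∈ Finset.range (ρ.totalDegree + 1), A * homogeneousComponent l ρ ^ q =
      ∑ i, c i * f i ^ q + b * F := by
    rw [← Finset.mul_sum, hq, ← sum_pow_char_pow, sum_homogeneousComponent]
    linear_combination hb
  have h2 := congrArg (homogeneousComponent (D + j * q)) h1
  rw [map_add, map_sum, map_sum] at h2
  simp only [homogeneousComponent_mul_of_isHomogeneous hFh,
    homogeneousComponent_mul_of_isHomogeneous ((hfh _).pow q),
    homogeneousComponent_mul_of_isHomogeneous ((homogeneousComponent_isHomogeneous _ ρ).pow q)]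
    at h2
  have h3 : ∀ l, l ≠ j → (if l * q ≤ D + j * q then
      homogeneousComponent (D + j * q - l * q) A * homogeneousComponent l ρ ^ q else 0) = 0 := by
    intro l hl
    split_ifs with hle
    · rcases lt_or_gt_of_ne hl with hlj | hlj
      · -- the cofactor has degree `D + (j - l) q > deg A`
        have : (l + 1) * q ≤ j * q := Nat.mul_le_mul_right q hlj
        rw [homogeneousComponent_eq_zero _ _ (by rw [add_mul, one_mul] at this; omega), zero_mul]
      · have : (j + 1) * q ≤ l * q := Nat.mul_le_mul_right q hlj
        rw [add_mul, one_mul] at this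
        omega
    · rfl
  have h4 : ∑ l ∈ Finset.range (ρ.totalDegree + 1), (if l * q ≤ D + j * q then
      homogeneousComponent (D + j * q - l * q) A * homogeneousComponent l ρ ^ q else 0) =
      homogeneousComponent D A * homogeneousComponent j ρ ^ q := by
    by_cases hj : j ∈ Finset.range (ρ.totalDegree + 1)
    · rw [Finset.sum_eq_single_of_mem j hj fun l _ hl => h3 l hl, if_pos (by omega),
        Nat.add_sub_cancel]
    · rw [Finset.sum_eq_zero fun l hl => h3 l (by rintro rfl; exact hj hl),
        homogeneousComponent_eq_zero j ρ (by simpa [Nat.lt_succ_iff] using hj),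
        zero_pow (pow_pos hp.pos e).ne', mul_zero]
  rw [h4] at h2
  refine ⟨fun i => if d i * q ≤ D + j * q then
    homogeneousComponent (D + j * q - d i * q) (c i) else 0, ?_⟩
  rw [h2]
  have h5 : ∀ i, (if d i * q ≤ D + j * q then
      homogeneousComponent (D + j * q - d i * q) (c i) else 0) * f i ^ q =
      if d i * q ≤ D + j * q then
      homogeneousComponent (D + j * q - d i * q) (c i) * f i ^ q else 0 := fun i => by
    rw [ite_mul, zero_mul]
  simp only [h5]
  rw [add_sub_cancel_left]
  split_ifs
  · exact dvd_mul_left _ _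
  · exact dvd_zero _

theorem sum_mul_sum_eq {Ω : Type} [Field Ω] {b : Fin 3 → Ω} {w : ℕ → Fin 3 → Ω} {v : ℕ → Ω}
    (hw : ∀ j, ∑ i, b i * w j i = v j) (s : Finset ℕ) :
    ∑ i, b i * ∑ j ∈ s, w j i = ∑ j ∈ s, v j := by
  simp only [Finset.mul_sum, ← hw]
  exact Finset.sum_comm

end Main

/-- Let `K` be an algebraically closed field of characteristic `p > 0`,
let `f_1,f_2,f_3,g_1,g_2,g_3 ∈ K[x,y,z]` be homogeneous with `deg f_i = d_i`,
`deg g_i = k - d_i`, `d_1 + d_2 + d_3 = 2 * k`, `k ≥ d_i`, and radicals of `(f_1,f_2,f_3)`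
and `(g_1,g_2,g_3)` both equal to `(x,y,z)`. Set `F = f_1g_1 + f_2g_2 + f_3g_3` and assume
`R = K[x,y,z]/(F)` is a normal domain. Then in `R`, `(f_1,f_2,f_3)^* = (f_1,f_2,f_3)^+`,
and every homogeneous element of degree `≥ k` lies in `(f_1,f_2,f_3)^*`. -/
theorem statement16 (K : Type) [Field K] [IsAlgClosed K]
    (p : ℕ) [Fact p.Prime] [CharP K p]
    (k : ℕ) (d : Fin 3 → ℕ)
    (f g : Fin 3 → MvPolynomial (Fin 3) K)
    (hfh : ∀ i, (f i).IsHomogeneous (d i))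
    (hgh : ∀ i, (g i).IsHomogeneous (k - d i))
    (hsum : d 0 + d 1 + d 2 = 2 * k)
    (hk : ∀ i, d i ≤ k)
    (hfrad : (Ideal.span (Set.range f)).radical = Ideal.span (Set.range X))
    (hgrad : (Ideal.span (Set.range g)).radical = Ideal.span (Set.range X))
    (F : MvPolynomial (Fin 3) K) (hF : F = ∑ i, f i * g i)
    (hdom : IsDomain (MvPolynomial (Fin 3) K ⧸ Ideal.span {F}))
    (hnorm : IsIntegrallyClosed (MvPolynomial (Fin 3) K ⧸ Ideal.span {F})) :
    tightClosure p
        (Ideal.span (Set.range fun i => Ideal.Quotient.mk (Ideal.span {F}) (f i))) =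
      plusClosure (MvPolynomial (Fin 3) K ⧸ Ideal.span {F})
        (Ideal.span (Set.range fun i => Ideal.Quotient.mk (Ideal.span {F}) (f i))) ∧
    ∀ (h : MvPolynomial (Fin 3) K) (m : ℕ), k ≤ m → h.IsHomogeneous m →
      Ideal.Quotient.mk (Ideal.span {F}) h ∈ tightClosure p
        (Ideal.span (Set.range fun i => Ideal.Quotient.mk (Ideal.span {F}) (f i))) := by
  have hF0 : (Ideal.span {F}).IsPrime := (Ideal.Quotient.isDomain_iff_prime _).mp hdom
  have hFh : F.IsHomogeneous k := by
    rw [hF]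
    refine IsHomogeneous.sum _ _ _ fun i _ => ?_
    have := (hfh i).mul (hgh i)
    rwa [Nat.add_sub_cancel' (hk i)] at this
  let R := MvPolynomial (Fin 3) K ⧸ Ideal.span {F}
  let π : MvPolynomial (Fin 3) K →ₐ[K] R := Ideal.Quotient.mkₐ K (Ideal.span {F})
  have hπs : Function.Surjective π := Ideal.Quotient.mkₐ_surjective _ _
  have hπ0 : ∀ h, π h = 0 ↔ F ∣ h := fun h => by
    rw [← Ideal.mem_span_singleton]; exact Ideal.Quotient.eq_zero_iff_mem
  -- `x` is the generic point of the curve, with coordinates in `Ω`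
  let Ω := AlgebraicClosure (FractionRing R)
  let τ : MvPolynomial (Fin 3) K →ₐ[K] Ω := (IsScalarTower.toAlgHom K R Ω).comp π
  have hinj : Function.Injective (algebraMap R Ω) := by
    rw [IsScalarTower.algebraMap_eq R (FractionRing R) Ω]
    exact (algebraMap (FractionRing R) Ω).injective.comp (IsFractionRing.injective _ _)
  let x : Fin 3 → Ω := fun i => τ (X i)
  have hxτ : ∀ h, aeval x h = algebraMap R Ω (π h) := fun h =>
    (DFunLike.congr_fun (aeval_unique τ) h).symm
  have hx : ∀ h : MvPolynomial (Fin 3) K, aeval x h = 0 ↔ F ∣ h := fun h => by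
    rw [hxτ, map_eq_zero_iff _ hinj, hπ0]
  have hcR : CharP R p := charP_of_injective_ringHom (algebraMap K R).injective p
  have hcΩ : CharP Ω p := charP_of_injective_ringHom hinj p
  have hintegral : ∀ y : Ω, (∀ V : ValuationSubring Ω,
      (∀ h : MvPolynomial (Fin 3) K, aeval x h ∈ V) → y ∈ V) → IsIntegral R y := fun y hy =>
    (isIntegral_iff_forall_valuationSubring y).mpr fun V hV => hy V fun h => by
      rw [hxτ]; exact hV _
  let a : Fin 3 → R := fun i => π (f i)
  have hplus : plusClosure R (Ideal.span (Set.range a)) ⊆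
      tightClosure p (Ideal.span (Set.range a)) := plusClosure_subset_tightClosure a
  refine ⟨Set.Subset.antisymm ?_ hplus, fun h m hm hh => hplus ?_⟩
  · rintro r ⟨c, hc, e₀, hr⟩
    obtain ⟨A, rfl⟩ := hπs c
    obtain ⟨ρ, rfl⟩ := hπs r
    obtain ⟨B, D, e₁, hB, hFB, hBρ⟩ := exists_homogeneous_multiplier p hFh hfh
      (A := A) (ρ := ρ) (fun h => hc ((hπ0 A).mpr h)) (e₀ := e₀) (by
        intro e he
        have h1 : π A * π ρ ^ p ^ e ∈ Ideal.span (Set.range fun i => a i ^ p ^ e) := by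
          rw [← bracketPow_span]; exact hr e he
        obtain ⟨s, hs⟩ := Ideal.mem_span_range_iff_exists_fun.mp h1
        choose c hc using fun i => hπs (s i)
        refine ⟨c, (hπ0 _).mp ?_⟩
        simp only [map_sub, map_mul, map_pow, map_sum, hc, ← hs, a, sub_self])
    choose w hw hwV using fun j => exists_integral_solution p hfh hgh hsum hk hfrad hgrad hF hx
      (homogeneousComponent_isHomogeneous j ρ) (Or.inr ⟨B, D, e₁, hB, hFB, hBρ j⟩)
    refine mem_plusClosure_of_isIntegral hinj a _
      (fun i => ∑ j ∈ Finset.range (ρ.totalDegree + 1), w j i)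
      (fun i => hintegral _ fun V hV => sum_mem fun j _ => hwV j i V hV) ?_
    simp only [a, ← hxτ]
    refine (sum_mul_sum_eq hw _).trans ?_
    rw [← map_sum, sum_homogeneousComponent]
  · obtain ⟨w, hw, hwV⟩ := exists_integral_solution p hfh hgh hsum hk hfrad hgrad hF hx hh
      (Or.inl hm)
    refine mem_plusClosure_of_isIntegral hinj a _ w (fun i => hintegral _ (hwV i)) ?_
    change ∑ i, algebraMap R Ω (π (f i)) * w i = algebraMap R Ω (π h)
    simpa only [← hxτ] using hw
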